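/- arXiv:2503.12742 — 8 statements merged into one kernel-verified Lean document; each statement's English description precedes it below -/
import Mathlib

section
/- Let Λ be an index set, Υ ⊆ Λ a finite subset, and B a group acting on a set I_λ for each λ ∈ Λ, so that each action B ↷ I_λ is transitive and every point stabilizer is finite. Let U be an untwisted generalized wreath-like product of the family {A_{λ,i}} over B, i.e. there are a surjective group homomorphism ε : U → B and subgroups A_{λ,i} ≤ U (λ ∈ Λ, i ∈ I_λ) satisfying conditions (i)–(v) of the context. Assume that for every λ ∈ Υ one of the following holds: (a) the subgroups A_{λ,i} are infinite cyclic; or (b) the subgroups A_{λ,i} are abelian and the action B ↷ I_λ is regular (transitive with trivial point stabilizers). Then there exists a normal subgroup N of U contained in baseΥ := ⨆_{λ∈Υ, i∈I_λ} A_{λ,i} such that, in the quotient Q = U/N, the image K of baseΥ is contained in the center of Q and, for any choice of basepoints i₀(λ) ∈ I_λ, K is isomorphic to the direct product ∏_{λ∈Υ} A_{λ,i₀(λ)}. Moreover, Q/K is isomorphic to U/baseΥ, and the images of the subgroups A_{λ,i} with λ ∈ Λ∖Υ in U/baseΥ again satisfy conditions (i)–(v) with respect to the induced surjection U/baseΥ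 → B, each such image being isomorphic to A_{λ,i}. -/
universe u v

/-- `U` is an *untwisted generalized wreath-like product* of the family of subgroups
`A l i ≤ U` (`l : Λ`, `i : I l`) over `B` with respect to the surjection `ε : U → B`:
conditions (i)–(v) of the definition, together with surjectivity of `ε`. -/
structure IsUntwistedGWP {U : Type*} {B : Type*} [Group U] [Group B] {Λ : Type*}
    {I : Λ → Type*} [∀ l : Λ, MulAction B (I l)]
    (ε : U →* B) (A : ∀ l : Λ, I l → Subgroup U) : Prop where
  /-- `ε` is surjective. -/
  surjective : Function.Surjective ε
  /-- (i) each `A l i` is contained in `ker ε`. -/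
  le_ker : ∀ (l : Λ) (i : I l), A l i ≤ ε.ker
  /-- (ii) elements of distinct members of the family commute. -/
  commute : ∀ p q : Σ l : Λ, I l, p ≠ q → ∀ x ∈ A p.1 p.2, ∀ y ∈ A q.1 q.2, Commute x y
  /-- (iii) the family is independent … -/
  independent : iSupIndep fun p : Σ l : Λ, I l => A p.1 p.2
  /-- (iii) … and its supremum is `ker ε`. -/
  iSup_eq_ker : (⨆ p : Σ l : Λ, I l, A p.1 p.2) = ε.ker
  /-- (iv) `u • (A l i) • u⁻¹ = A l (ε u • i)`. -/
  conj_eq : ∀ (u : U) (l : Λ) (i : I l),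
    (A l i).map (MulAut.conj u).toMonoidHom = A l (ε u • i)
  /-- (v) (untwisted) every `u` with `ε u • i = i` commutes with all of `A l i`. -/
  untwisted : ∀ (l : Λ) (i : I l) (u : U), ε u • i = i → ∀ a ∈ A l i, Commute u a

/-- The subgroup `baseΥ = ⨆ (l ∈ Υ) (i : I l), A l i` of `U`. -/
def baseOn {U : Type*} [Group U] {Λ : Type*} {I : Λ → Type*}
    (A : ∀ l : Λ, I l → Subgroup U) (Υ : Set Λ) : Subgroup U :=
  ⨆ (l : Λ) (_ : l ∈ Υ) (i : I l), A l i

/-!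
Untwistedness makes `ker ε` abelian, so it is the internal direct sum of the `A l i`.  Take
`N = [U, baseΥ]`, which makes the image of `baseΥ` central by construction.  For basepoints `i₀`,
conjugating each `A l i` with `l ∈ Υ` onto `A l (i₀ l)` does not depend on the conjugating element,
again by untwistedness; the resulting endomorphism of `ker ε` is the identity on
`T = ⨆ l, A l (i₀ l)` and kills `N`, so `T ∩ N = 1`.  Since every element of `A l i` is congruent
modulo `N` to a conjugate in `A l (i₀ l)`, also `T N = baseΥ`, and hence
`baseΥ / N ≅ T ≅ ∏ l, A l (i₀ l)`.
-/

open scoped IsMulCommutative commutatorElement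

section SubgroupFamilies

variable {ι G H : Type*} [Group G]

theorem disjoint_map_of_disjoint_sup_ker [Group H] {f : G →* H} {K L : Subgroup G}
    (h : Disjoint K (L ⊔ f.ker)) : Disjoint (K.map f) (L.map f) := by
  rw [Subgroup.disjoint_def]
  rintro _ ⟨x, hxK, rfl⟩ hxL
  rw [← Subgroup.mem_comap, Subgroup.comap_map_eq] at hxL
  rw [Subgroup.disjoint_def.1 h hxK hxL, map_one]

theorem iSupIndep_map_of_disjoint_sup_ker [Group H] {f : G →* H} {C : ι → Subgroup G}
    (h : ∀ i, Disjoint (C i) ((⨆ (j) (_ : j ≠ i), C j) ⊔ f.ker)) :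
    iSupIndep fun i => (C i).map f := fun i => by
  simpa only [Subgroup.map_iSup] using disjoint_map_of_disjoint_sup_ker (h i)

theorem iSupIndep_comap_of_injective [Group H] {f : H →* G} (hf : Function.Injective f)
    {C : ι → Subgroup G} (hC : iSupIndep C) : iSupIndep fun i => (C i).comap f := fun i => by
  have iSup_comap_le : (⨆ (j) (_ : j ≠ i), (C j).comap f) ≤ (⨆ (j) (_ : j ≠ i), C j).comap f :=
    iSup₂_le fun j hj => Subgroup.comap_mono (le_iSup₂_of_le j hj le_rfl)
  rw [Subgroup.disjoint_def]
  intro x hx hx'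
  exact (map_eq_one_iff f hf).1 (Subgroup.disjoint_def.1 (hC i) hx (iSup_comap_le hx'))

theorem iSup_subgroupOf_iSup_eq_top (C : ι → Subgroup G) :
    ⨆ i, (C i).subgroupOf (⨆ j, C j) = ⊤ := by
  apply Subgroup.map_injective (Subgroup.subtype_injective _)
  simp only [Subgroup.map_iSup, Subgroup.map_subgroupOf_eq_of_le (le_iSup C _),
    ← MonoidHom.range_eq_map, Subgroup.range_subtype]

theorem exists_addMonoidHom_extending {M N : Type*} [AddCommGroup M] [AddCommGroup N]
    {C : ι → AddSubgroup M} (hC : iSupIndep C) (htop : ⨆ i, C i = ⊤) (f : ∀ i, C i →+ N) :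
    ∃ F : M →+ N, ∀ i (x : C i), F x = f i x := by
  classical
  have sum_surjective : Function.Surjective (DFinsupp.sumAddHom fun i => (C i).subtype) := by
    rw [← AddMonoidHom.range_eq_top, eq_top_iff, ← htop]
    exact iSup_le fun i x hx => ⟨DFinsupp.single i ⟨x, hx⟩, DFinsupp.sumAddHom_single _ i _⟩
  let e := AddEquiv.ofBijective _ ⟨hC.dfinsuppSumAddHom_injective, sum_surjective⟩
  have e_symm_coe (i) (x : C i) : e.symm x = DFinsupp.single i x := by
    rw [AddEquiv.symm_apply_eq]
    exact (DFinsupp.sumAddHom_single (fun i => (C i).subtype) i x).symm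
  refine ⟨(DFinsupp.sumAddHom f).comp e.symm.toAddMonoidHom, fun i x => ?_⟩
  simp [e_symm_coe]

theorem exists_monoidHom_extending {M N : Type*} [CommGroup M] [CommGroup N]
    {C : ι → Subgroup M} (hC : iSupIndep C) (htop : ⨆ i, C i = ⊤) (f : ∀ i, C i →* N) :
    ∃ F : M →* N, ∀ i (x : C i), F x = f i x := by
  have additive_iSup_eq_top : ⨆ i, (C i).toAddSubgroup = ⊤ := by
    rw [← OrderIso.map_iSup, htop, OrderIso.map_top]
  obtain ⟨F, hF⟩ := exists_addMonoidHom_extending (hC.map_orderIso Subgroup.toAddSubgroup)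
    additive_iSup_eq_top fun i => (f i).toAdditive
  exact ⟨MonoidHom.toAdditive.symm F, hF⟩

theorem exists_monoidHom_iSup_extending [CommGroup H] {C : ι → Subgroup G}
    [IsMulCommutative ↥(⨆ i, C i)] (hC : iSupIndep C) (f : ∀ i, C i →* H) :
    ∃ F : ↥(⨆ i, C i) →* H, ∀ i (x : ↥(⨆ i, C i)) (hx : (x : G) ∈ C i), F x = f i ⟨x, hx⟩ := by
  obtain ⟨F, hF⟩ := exists_monoidHom_extending
    (iSupIndep_comap_of_injective (Subgroup.subtype_injective (⨆ i, C i)) hC)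
    (iSup_subgroupOf_iSup_eq_top C)
    fun i => (f i).comp (Subgroup.subgroupOfEquivOfLe (le_iSup C i)).toMonoidHom
  exact ⟨F, fun i x hx => hF i ⟨x, hx⟩⟩

theorem nonempty_iSup_mulEquiv_pi [Finite ι] {C : ι → Subgroup G}
    (hcomm : Pairwise fun i j => ∀ x y : G, x ∈ C i → y ∈ C j → Commute x y)
    (hC : iSupIndep C) : Nonempty (↥(⨆ i, C i) ≃* ∀ i, C i) := by
  have := Fintype.ofFinite ι
  rw [← Subgroup.noncommPiCoprod_range (hcomm := hcomm)]
  exact ⟨(MonoidHom.ofInjective (Subgroup.injective_noncommPiCoprod_of_iSupIndep hC)).symm⟩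

theorem nonempty_map_mulEquiv_of_disjoint_ker [Group H] {f : G →* H} {K : Subgroup G}
    (h : Disjoint K f.ker) : Nonempty (K.map f ≃* K) := by
  have injective : Function.Injective (f.subgroupMap K) := by
    rw [← MonoidHom.ker_eq_bot_iff, Subgroup.ker_subgroupMap, Subgroup.subgroupOf_eq_bot]
    exact h.symm
  exact ⟨(MulEquiv.ofBijective _ ⟨injective, f.subgroupMap_surjective K⟩).symm⟩

theorem map_le_center_of_commutator_le_ker [Group H] {f : G →* H} (hf : Function.Surjective f)
    {K : Subgroup G} (h : ⁅(⊤ : Subgroup G), K⁆ ≤ f.ker) : K.map f ≤ Subgroup.center H := by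
  rw [← Subgroup.commutator_top_right_eq_bot_iff_le_center, Subgroup.commutator_comm,
    ← Subgroup.map_top_of_surjective f hf, ← Subgroup.map_commutator,
    (Subgroup.map_eq_bot_iff _).2 h]

theorem monoidHom_eq_of_mem_iSup [Group H] {K : Subgroup G} {C : ι → Subgroup G}
    (hCK : ∀ i, C i ≤ K) {φ ψ : K →* H} (h : ∀ i (x : K), (x : G) ∈ C i → φ x = ψ x)
    {x : K} (hx : (x : G) ∈ ⨆ i, C i) : φ x = ψ x := by
  have iSup_le_eqLocus : ⨆ i, C i ≤ (φ.eqLocus ψ).map K.subtype :=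
    iSup_le fun i y hy => ⟨⟨y, hCK i hy⟩, h i ⟨y, hCK i hy⟩ hy, rfl⟩
  obtain ⟨y, hy, hyx⟩ := iSup_le_eqLocus hx
  obtain rfl : y = x := Subtype.ext hyx
  exact hy

theorem commutator_top_le_map_ker_of_conj_invariant [Group H] {K L : Subgroup G} [K.Normal]
    (hLK : L ≤ K) {φ : K →* H}
    (h : ∀ (g : G) (x : K), (x : G) ∈ L → φ (MulAut.conjNormal g x) = φ x) :
    ⁅(⊤ : Subgroup G), L⁆ ≤ φ.ker.map K.subtype :=
  Subgroup.commutator_le.2 fun g _ x hx =>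
    ⟨MulAut.conjNormal g ⟨x, hLK hx⟩ * ⟨x, hLK hx⟩⁻¹,
      (map_mul_inv φ _ _).trans (mul_inv_eq_one.2 (h g ⟨x, hLK hx⟩ hx)), rfl⟩

end SubgroupFamilies

section BaseOn

variable {U Λ : Type*} [Group U] {I : Λ → Type*} {A : ∀ l : Λ, I l → Subgroup U} {Υ : Set Λ}

theorem baseOn_le_iff {K : Subgroup U} :
    baseOn A Υ ≤ K ↔ ∀ l ∈ Υ, ∀ i : I l, A l i ≤ K := by
  simp only [baseOn, iSup_le_iff]

theorem le_baseOn {l : Λ} (hl : l ∈ Υ) (i : I l) : A l i ≤ baseOn A Υ :=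
  baseOn_le_iff.1 le_rfl l hl i

theorem baseOn_eq_iSup_sigma : baseOn A Υ = ⨆ p : Σ l : Υ, I l.1, A p.1 p.2 := by
  rw [baseOn, iSup_sigma, iSup_subtype']

theorem sigma_compl_injective (Υ : Set Λ) : Function.Injective
    fun p : Σ l : {l : Λ // l ∉ Υ}, I l.1 => (⟨p.1.1, p.2⟩ : Σ l : Λ, I l) :=
  Subtype.val_injective.sigma_map fun _ => Function.injective_id

theorem baseOn_le_iSup_ne {l : Λ} (hl : l ∉ Υ) (i : I l) :
    baseOn A Υ ≤ ⨆ (p : Σ l : Λ, I l) (_ : p ≠ ⟨l, i⟩), A p.1 p.2 := by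
  refine baseOn_le_iff.2 fun m hm j => ?_
  refine le_iSup₂_of_le (f := fun (p : Σ l : Λ, I l) _ => A p.1 p.2) ⟨m, j⟩ ?_ le_rfl
  exact fun h => hl (by rwa [← (Sigma.mk.inj h).1])

end BaseOn

namespace IsUntwistedGWP

variable {U B : Type*} [Group U] [Group B] {Λ : Type*} {I : Λ → Type*}
  [∀ l : Λ, MulAction B (I l)] {ε : U →* B} {A : ∀ l : Λ, I l → Subgroup U} {Υ : Set Λ}

theorem isMulCommutative_ker (hU : IsUntwistedGWP ε A) : IsMulCommutative ε.ker := by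
  rw [← Subgroup.le_centralizer_iff_isMulCommutative]
  conv_lhs => rw [← hU.iSup_eq_ker]
  refine iSup_le fun p a ha => Subgroup.mem_centralizer_iff.2 fun x hx => ?_
  exact hU.untwisted p.1 p.2 x (by rw [MonoidHom.mem_ker.1 hx, one_smul]) a ha

theorem conj_mem (hU : IsUntwistedGWP ε A) (u : U) {l : Λ} {i : I l} {x : U} (hx : x ∈ A l i) :
    u * x * u⁻¹ ∈ A l (ε u • i) :=
  hU.conj_eq u l i ▸ Subgroup.mem_map_of_mem (MulAut.conj u).toMonoidHom hx

theorem conj_eq_conj_of_smul_eq (hU : IsUntwistedGWP ε A) {u v : U} {l : Λ} {i : I l}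
    (h : ε u • i = ε v • i) {x : U} (hx : x ∈ A l i) : u * x * u⁻¹ = v * x * v⁻¹ := by
  have fixes : ε (v⁻¹ * u) • i = i := by
    rw [map_mul, mul_smul, h, ← mul_smul, ← map_mul, inv_mul_cancel, map_one, one_smul]
  have commutes : v⁻¹ * u * x = x * (v⁻¹ * u) := hU.untwisted l i _ fixes x hx
  calc u * x * u⁻¹ = v * (v⁻¹ * u * x) * u⁻¹ := by group
    _ = v * (x * (v⁻¹ * u)) * u⁻¹ := by rw [commutes]
    _ = v * x * v⁻¹ := by group

theorem baseOn_le_ker (hU : IsUntwistedGWP ε A) : baseOn A Υ ≤ ε.ker :=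
  baseOn_le_iff.2 fun l _ i => hU.le_ker l i

theorem normal_baseOn (hU : IsUntwistedGWP ε A) : (baseOn A Υ).Normal := by
  refine ⟨fun x hx u => ?_⟩
  have le_comap_conj : baseOn A Υ ≤ (baseOn A Υ).comap (MulAut.conj u).toMonoidHom :=
    baseOn_le_iff.2 fun l hl i y hy => le_baseOn hl (ε u • i) (hU.conj_mem u hy)
  exact le_comap_conj hx

theorem exists_ker_endomorphism_eq_conj (hU : IsUntwistedGWP ε A) (v : (Σ l : Λ, I l) → U) :
    ∃ Φ : ε.ker →* ε.ker, ∀ (p : Σ l : Λ, I l) (x : ε.ker), (x : U) ∈ A p.1 p.2 →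
      Φ x = MulAut.conjNormal (v p) x := by
  have := hU.isMulCommutative_ker
  have : IsMulCommutative ↥(⨆ p : Σ l : Λ, I l, A p.1 p.2) := by rwa [hU.iSup_eq_ker]
  obtain ⟨F, hF⟩ := exists_monoidHom_iSup_extending hU.independent fun p =>
    (MulAut.conjNormal (v p)).toMonoidHom.comp (Subgroup.inclusion (hU.le_ker p.1 p.2))
  exact ⟨F.comp (Subgroup.inclusion hU.iSup_eq_ker.ge), fun p x hx => hF p _ hx⟩

section Basepoints

variable {i₀ : ∀ l : Υ, I l.1}

theorem exists_ker_endomorphism_onto_basepoints (hU : IsUntwistedGWP ε A)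
    (h₀ : ∀ (l : Υ) (i : I l.1), ∃ b : B, b • i = i₀ l) :
    ∃ Φ : ε.ker →* ε.ker, ∀ (l : Υ) (i : I l.1) (u : U), ε u • i = i₀ l →
      ∀ x : ε.ker, (x : U) ∈ A l.1 i → Φ x = MulAut.conjNormal u x := by
  have exists_conjugator (p : Σ l : Λ, I l) :
      ∃ v : U, ∀ hp : p.1 ∈ Υ, ε v • p.2 = i₀ ⟨p.1, hp⟩ := by
    by_cases hp : p.1 ∈ Υ
    · obtain ⟨b, hb⟩ := h₀ ⟨p.1, hp⟩ p.2
      obtain ⟨v, rfl⟩ := hU.surjective b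
      exact ⟨v, fun _ => hb⟩
    · exact ⟨1, fun h => absurd h hp⟩
  choose v hv using exists_conjugator
  obtain ⟨Φ, hΦ⟩ := hU.exists_ker_endomorphism_eq_conj v
  refine ⟨Φ, fun l i u hu x hx => ?_⟩
  rw [hΦ ⟨l, i⟩ x hx]
  exact Subtype.ext (hU.conj_eq_conj_of_smul_eq ((hv ⟨l, i⟩ l.2).trans hu.symm) hx)

theorem disjoint_iSup_basepoints_commutator (hU : IsUntwistedGWP ε A)
    (h₀ : ∀ (l : Υ) (i : I l.1), ∃ b : B, b • i = i₀ l) :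
    Disjoint (⨆ l : Υ, A l.1 (i₀ l)) ⁅(⊤ : Subgroup U), baseOn A Υ⁆ := by
  obtain ⟨Φ, hΦ⟩ := hU.exists_ker_endomorphism_onto_basepoints h₀
  have Φ_fixes (x : ε.ker) (hx : (x : U) ∈ ⨆ l : Υ, A l.1 (i₀ l)) : Φ x = x := by
    refine monoidHom_eq_of_mem_iSup (C := fun l : Υ => A l.1 (i₀ l)) (ψ := MonoidHom.id _)
      (fun l => hU.le_ker l.1 (i₀ l)) (fun l y hy => ?_) hx
    rw [hΦ l (i₀ l) 1 (by rw [map_one, one_smul]) y hy, map_one, MulAut.one_apply,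
      MonoidHom.id_apply]
  have Φ_conj (u : U) (x : ε.ker) (hx : (x : U) ∈ baseOn A Υ) :
      Φ (MulAut.conjNormal u x) = Φ x := by
    rw [baseOn_eq_iSup_sigma] at hx
    refine monoidHom_eq_of_mem_iSup (C := fun p : Σ l : Υ, I l.1 => A p.1 p.2)
      (φ := Φ.comp (MulAut.conjNormal u).toMonoidHom)
      (fun p => hU.le_ker p.1.1 p.2) (fun p y hy => ?_) hx
    obtain ⟨b, hb⟩ := h₀ p.1 (ε u • p.2)
    obtain ⟨v, rfl⟩ := hU.surjective b
    calc Φ (MulAut.conjNormal u y)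
        = MulAut.conjNormal v (MulAut.conjNormal u y) :=
          hΦ p.1 (ε u • p.2) v hb _ (hU.conj_mem u hy)
      _ = MulAut.conjNormal (v * u) y := by rw [map_mul, MulAut.mul_apply]
      _ = Φ y := (hΦ p.1 p.2 (v * u) (by rw [map_mul, mul_smul, hb]) y hy).symm
  have Φ_kills := commutator_top_le_map_ker_of_conj_invariant hU.baseOn_le_ker Φ_conj
  refine Subgroup.disjoint_def.2 fun {x} hxT hxN => ?_
  obtain ⟨y, hy, rfl⟩ := Φ_kills hxN
  exact congrArg Subtype.val ((Φ_fixes y hxT).symm.trans hy)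

theorem iSup_basepoints_sup_commutator (hU : IsUntwistedGWP ε A)
    (h₀ : ∀ (l : Υ) (i : I l.1), ∃ b : B, b • i = i₀ l) :
    (⨆ l : Υ, A l.1 (i₀ l)) ⊔ ⁅(⊤ : Subgroup U), baseOn A Υ⁆ = baseOn A Υ := by
  have := hU.normal_baseOn (Υ := Υ)
  refine le_antisymm (sup_le (iSup_le fun l => le_baseOn l.2 _)
    (Subgroup.commutator_le_right _ _)) (baseOn_le_iff.2 fun l hl i x hx => ?_)
  obtain ⟨b, hb⟩ := h₀ ⟨l, hl⟩ i
  obtain ⟨v, rfl⟩ := hU.surjective b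
  have conj_mem_basepoint : v * x * v⁻¹ ∈ ⨆ l : Υ, A l.1 (i₀ l) :=
    le_iSup (fun l : Υ => A l.1 (i₀ l)) ⟨l, hl⟩ (hb ▸ hU.conj_mem v hx)
  have commutator_mem : ⁅v, x⁆⁻¹ ∈ ⁅(⊤ : Subgroup U), baseOn A Υ⁆ :=
    inv_mem (Subgroup.commutator_mem_commutator (Subgroup.mem_top v) (le_baseOn hl i hx))
  rw [show x = ⁅v, x⁆⁻¹ * (v * x * v⁻¹) by rw [commutatorElement_def]; group]
  exact mul_mem (Subgroup.mem_sup_right commutator_mem) (Subgroup.mem_sup_left conj_mem_basepoint)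

theorem nonempty_iSup_basepoints_mulEquiv_pi (hU : IsUntwistedGWP ε A) [Finite Υ]
    (i₀ : ∀ l : Υ, I l.1) : Nonempty (↥(⨆ l : Υ, A l.1 (i₀ l)) ≃* ∀ l : Υ, A l.1 (i₀ l)) := by
  have injective : Function.Injective fun l : Υ => (⟨l.1, i₀ l⟩ : Σ l : Λ, I l) :=
    fun _ _ h => Subtype.ext (congrArg Sigma.fst h)
  exact nonempty_iSup_mulEquiv_pi
    (fun l m hlm x y hx hy => hU.commute ⟨l, i₀ l⟩ ⟨m, i₀ m⟩ (injective.ne hlm) x hx y hy)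
    (hU.independent.comp injective)

theorem nonempty_map_baseOn_mulEquiv_pi (hU : IsUntwistedGWP ε A) [Finite Υ]
    (h₀ : ∀ (l : Υ) (i : I l.1), ∃ b : B, b • i = i₀ l) {Q : Type*} [Group Q] {π : U →* Q}
    (hπ : π.ker = ⁅(⊤ : Subgroup U), baseOn A Υ⁆) :
    Nonempty ((baseOn A Υ).map π ≃* ∀ l : Υ, A l.1 (i₀ l)) := by
  have map_baseOn : (baseOn A Υ).map π = (⨆ l : Υ, A l.1 (i₀ l)).map π := by
    rw [← hU.iSup_basepoints_sup_commutator h₀, ← hπ, Subgroup.map_sup,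
      (Subgroup.map_eq_bot_iff _).2 le_rfl, sup_bot_eq]
  obtain ⟨e⟩ := nonempty_map_mulEquiv_of_disjoint_ker
    (hπ ▸ hU.disjoint_iSup_basepoints_commutator h₀)
  obtain ⟨e'⟩ := hU.nonempty_iSup_basepoints_mulEquiv_pi i₀
  exact ⟨(MulEquiv.subgroupCongr map_baseOn).trans (e.trans e')⟩

end Basepoints

section Quotient

theorem disjoint_baseOn (hU : IsUntwistedGWP ε A) {l : Λ} (hl : l ∉ Υ) (i : I l) :
    Disjoint (A l i) (baseOn A Υ) :=
  (hU.independent ⟨l, i⟩).mono_right (baseOn_le_iSup_ne hl i)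

variable {R : Type*} [Group R] {ρ : U →* R}

theorem iSupIndep_map_compl (hU : IsUntwistedGWP ε A) (hρ : ρ.ker = baseOn A Υ) :
    iSupIndep fun p : Σ l : {l : Λ // l ∉ Υ}, I l.1 => (A p.1.1 p.2).map ρ := by
  refine iSupIndep_map_of_disjoint_sup_ker fun p => ?_
  refine (hU.independent ⟨p.1.1, p.2⟩).mono_right
    (sup_le (iSup₂_le fun q hqp => ?_) (hρ.trans_le (baseOn_le_iSup_ne p.1.2 p.2)))
  exact le_iSup₂_of_le (f := fun (j : Σ l : Λ, I l) _ => A j.1 j.2) ⟨q.1.1, q.2⟩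
    ((sigma_compl_injective Υ).ne hqp) le_rfl

theorem iSup_map_compl (hU : IsUntwistedGWP ε A) (hρ : ρ.ker = baseOn A Υ) :
    ⨆ p : Σ l : {l : Λ // l ∉ Υ}, I l.1, (A p.1.1 p.2).map ρ = ε.ker.map ρ := by
  rw [← hU.iSup_eq_ker, Subgroup.map_iSup]
  refine le_antisymm (iSup_le fun p => le_iSup_of_le ⟨p.1.1, p.2⟩ le_rfl) (iSup_le fun p => ?_)
  by_cases hp : p.1 ∈ Υ
  · rw [(Subgroup.map_eq_bot_iff _).2 (hρ ▸ le_baseOn hp p.2)]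
    exact bot_le
  · exact le_iSup (fun p : Σ l : {l : Λ // l ∉ Υ}, I l.1 => (A p.1.1 p.2).map ρ) ⟨⟨p.1, hp⟩, p.2⟩

theorem map_compl (hU : IsUntwistedGWP ε A) (hρ : ρ.ker = baseOn A Υ)
    (hsurj : Function.Surjective ρ) {δ : R →* B} (hδ : ∀ u, δ (ρ u) = ε u) :
    IsUntwistedGWP δ fun (l : {l : Λ // l ∉ Υ}) (i : I l.1) => (A l.1 i).map ρ where
  surjective b := (hU.surjective b).imp' ρ fun u hu => (hδ u).trans hu
  le_ker l i := by
    rintro _ ⟨x, hx, rfl⟩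
    exact (hδ x).trans (hU.le_ker l.1 i hx)
  commute := by
    rintro p q hpq _ ⟨x, hx, rfl⟩ _ ⟨y, hy, rfl⟩
    exact (hU.commute _ _ ((sigma_compl_injective Υ).ne hpq) x hx y hy).map ρ
  independent := hU.iSupIndep_map_compl hρ
  iSup_eq_ker := by
    have ker_δ : ε.ker = δ.ker.comap ρ := by
      ext u
      rw [Subgroup.mem_comap, MonoidHom.mem_ker, MonoidHom.mem_ker, hδ]
    rw [hU.iSup_map_compl hρ, ker_δ, Subgroup.map_comap_eq_self_of_surjective hsurj]
  conj_eq r l i := by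
    obtain ⟨u, rfl⟩ := hsurj r
    rw [hδ, ← hU.conj_eq u l.1 i, Subgroup.map_map, Subgroup.map_map]
    congr 1
    ext x
    simp
  untwisted l i r hr := by
    obtain ⟨u, rfl⟩ := hsurj r
    rintro _ ⟨x, hx, rfl⟩
    exact (hU.untwisted l.1 i u (hδ u ▸ hr) x hx).map ρ

end Quotient

end IsUntwistedGWP

theorem central_quotient_of_untwisted_gwp_general
    {U : Type u} {B : Type v} [Group U] [Group B] {Λ : Type*} {I : Λ → Type*}
    [∀ l : Λ, MulAction B (I l)]
    (Υ : Set Λ) (hfin : Υ.Finite)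
    (htrans : ∀ l ∈ Υ, ∀ i j : I l, ∃ b : B, b • i = j)
    (ε : U →* B) (A : ∀ l : Λ, I l → Subgroup U)
    (hU : IsUntwistedGWP ε A) :
    ∃ N : Subgroup U, N.Normal ∧ N ≤ baseOn A Υ ∧
      ∃ (Q : Type u) (_ : Group Q) (π : U →* Q),
        Function.Surjective π ∧ π.ker = N ∧
        (baseOn A Υ).map π ≤ Subgroup.center Q ∧
        (∀ i₀ : ∀ l : Υ, I l.1,
          Nonempty (((baseOn A Υ).map π) ≃* ((l : Υ) → A l.1 (i₀ l)))) ∧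
        ∃ (R : Type u) (_ : Group R) (ρ : Q →* R) (ρ' : U →* R),
          Function.Surjective ρ ∧ ρ.ker = (baseOn A Υ).map π ∧
          Function.Surjective ρ' ∧ ρ'.ker = baseOn A Υ ∧
          ∃ δ : R →* B,
            (∀ u : U, δ (ρ' u) = ε u) ∧
            IsUntwistedGWP δ
              (fun (l : {l : Λ // l ∉ Υ}) (i : I l.1) => (A l.1 i).map ρ') ∧
            ∀ (l : {l : Λ // l ∉ Υ}) (i : I l.1),
              Nonempty (((A l.1 i).map ρ') ≃* A l.1 i) := by
  have := hfin.to_subtype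
  have := hU.normal_baseOn (Υ := Υ)
  let N := ⁅(⊤ : Subgroup U), baseOn A Υ⁆
  let π := QuotientGroup.mk' N
  let ρ' := QuotientGroup.mk' (baseOn A Υ)
  have ker_π : π.ker = N := QuotientGroup.ker_mk' N
  have ker_ρ' : ρ'.ker = baseOn A Υ := QuotientGroup.ker_mk' _
  have surjective_π : Function.Surjective π := QuotientGroup.mk'_surjective N
  have surjective_ρ' : Function.Surjective ρ' := QuotientGroup.mk'_surjective _
  have N_le : N ≤ baseOn A Υ := Subgroup.commutator_le_right _ _
  refine ⟨N, inferInstance, N_le, U ⧸ N, inferInstance, π, surjective_π, ker_π,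
    map_le_center_of_commutator_le_ker surjective_π ker_π.ge,
    fun i₀ => hU.nonempty_map_baseOn_mulEquiv_pi (fun l i => htrans l l.2 i (i₀ l)) ker_π,
    U ⧸ baseOn A Υ, inferInstance, QuotientGroup.lift N ρ' (N_le.trans ker_ρ'.ge), ρ',
    QuotientGroup.lift_surjective_of_surjective N ρ' surjective_ρ' _,
    (QuotientGroup.ker_lift N ρ' _).trans (by rw [ker_ρ']), surjective_ρ', ker_ρ',
    QuotientGroup.lift _ ε hU.baseOn_le_ker, fun _ => rfl,
    hU.map_compl ker_ρ' surjective_ρ' fun _ => rfl,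
    fun l i => nonempty_map_mulEquiv_of_disjoint_ker (ker_ρ'.symm ▸ hU.disjoint_baseOn l.2 i)⟩

/-- Let `U` be an untwisted generalized wreath-like product of the family
`{A l i}` over `B`, where each action `B ↷ I l` is transitive with finite stabilizers, and let
`Υ ⊆ Λ` be a finite subset such that for every `l ∈ Υ` either (a) the `A l i` are infinite
cyclic, or (b) they are abelian and the action `B ↷ I l` is regular.  Then there is a normal
subgroup `N ≤ baseΥ` of `U` such that in `Q = U/N` the image `K` of `baseΥ` is central and is
isomorphic to `∏_{l ∈ Υ} A l (i₀ l)` for any choice of basepoints, while `Q/K ≅ U/baseΥ` and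
the images of the `A l i` with `l ∉ Υ` in `U/baseΥ` again form an untwisted generalized
wreath-like product over `B`, each image being isomorphic to `A l i`. -/
theorem central_quotient_of_untwisted_gwp
    {U : Type u} {B : Type v} [Group U] [Group B] {Λ : Type*} {I : Λ → Type*}
    [∀ l : Λ, MulAction B (I l)]
    (Υ : Set Λ) (hfin : Υ.Finite)
    (htrans : ∀ (l : Λ) (i j : I l), ∃ b : B, b • i = j)
    (hstab : ∀ (l : Λ) (i : I l), Finite (MulAction.stabilizer B i))
    (ε : U →* B) (A : ∀ l : Λ, I l → Subgroup U)
    (hU : IsUntwistedGWP ε A)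
    (hΥ : ∀ l ∈ Υ,
      (∀ i : I l, Nonempty (A l i ≃* Multiplicative ℤ)) ∨
      ((∀ i : I l, ∀ x ∈ A l i, ∀ y ∈ A l i, Commute x y) ∧
        ∀ (i : I l) (b : B), b • i = i → b = 1)) :
    ∃ N : Subgroup U, N.Normal ∧ N ≤ baseOn A Υ ∧
      ∃ (Q : Type u) (_ : Group Q) (π : U →* Q),
        Function.Surjective π ∧ π.ker = N ∧
        (baseOn A Υ).map π ≤ Subgroup.center Q ∧
        (∀ i₀ : ∀ l : Υ, I l.1,
          Nonempty (((baseOn A Υ).map π) ≃* ((l : Υ) → A l.1 (i₀ l)))) ∧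
        ∃ (R : Type u) (_ : Group R) (ρ : Q →* R) (ρ' : U →* R),
          Function.Surjective ρ ∧ ρ.ker = (baseOn A Υ).map π ∧
          Function.Surjective ρ' ∧ ρ'.ker = baseOn A Υ ∧
          ∃ δ : R →* B,
            (∀ u : U, δ (ρ' u) = ε u) ∧
            IsUntwistedGWP δ
              (fun (l : {l : Λ // l ∉ Υ}) (i : I l.1) => (A l.1 i).map ρ') ∧
            ∀ (l : {l : Λ // l ∉ Υ}) (i : I l.1),
              Nonempty (((A l.1 i).map ρ') ≃* A l.1 i) := by
  exact central_quotient_of_untwisted_gwp_general Υ hfin (fun l _ => htrans l) ε A hU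
end

section
/- For any group G with trivial abelianization (i.e. G equals its own commutator subgroup), there is an injective group homomorphism from Out(G) to Out(G/Z(G)), where the map sends the class of an automorphism α of G to the class of the automorphism of G/Z(G) induced by α. In particular, if Out(G/Z(G)) is trivial, then so is Out(G). -/
/-- The automorphism of `G/Z(G)` induced by an automorphism `α` of `G`,
sending `g·Z(G)` to `α(g)·Z(G)`. -/
def inducedCenterAut {G : Type*} [Group G] (α : G ≃* G) :
    (G ⧸ Subgroup.center G) ≃* (G ⧸ Subgroup.center G) :=
  QuotientGroup.congr (Subgroup.center G) (Subgroup.center G) α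
    (Subgroup.characteristic_iff_map_eq.mp inferInstance α)

/-- The subgroup of inner automorphisms is normal in `Aut G`, so that the outer automorphism
group `Out(G) = Aut(G)/Inn(G)` makes sense. -/
instance conjRangeNormal {G : Type*} [Group G] :
    ((MulAut.conj : G →* MulAut G).range).Normal := by
  constructor
  rintro x ⟨g, rfl⟩ f
  refine ⟨f g, ?_⟩
  ext y
  simp [MulAut.conj_apply, MulAut.mul_apply, MulAut.inv_def, mul_assoc]

/-! Two automorphisms of `G` inducing the same automorphism of `G/Z(G)` differ by a homomorphism
`G → Z(G)`. When there are no such homomorphisms besides the trivial one, as for perfect `G`, the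
map `Aut(G) → Aut(G/Z(G))` is therefore injective. It carries `Inn(G)` onto `Inn(G/Z(G))`, so that
`Inn(G)` is the full preimage of `Inn(G/Z(G))` and the induced map on `Out` is injective too. -/

section CentralDiv

variable {M H : Type*} [MulOneClass M] [Group H]

/-- The quotient `x ↦ f₁ x / f₂ x` of two homomorphisms that agree modulo the center of the
codomain; centrality of its values is what makes it multiplicative. -/
def centralDiv (f₁ f₂ : M →* H) (h : ∀ x, f₁ x / f₂ x ∈ Subgroup.center H) :
    M →* Subgroup.center H :=
  MonoidHom.mk' (fun x ↦ ⟨f₁ x / f₂ x, h x⟩) fun x y ↦ Subtype.ext <| by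
    calc f₁ (x * y) / f₂ (x * y)
        = f₁ x * (f₁ y / f₂ y) * (f₂ x)⁻¹ := by
          simp only [map_mul, div_eq_mul_inv, mul_inv_rev, mul_assoc]
      _ = f₁ x * (f₂ x)⁻¹ * (f₁ y / f₂ y) := by
          rw [mul_assoc, ← Subgroup.mem_center_iff.1 (h y) (f₂ x)⁻¹, mul_assoc]
      _ = f₁ x / f₂ x * (f₁ y / f₂ y) := by rw [← div_eq_mul_inv]

theorem monoidHom_eq_of_div_mem_center [Subsingleton (M →* Subgroup.center H)] {f₁ f₂ : M →* H}
    (h : ∀ x, f₁ x / f₂ x ∈ Subgroup.center H) : f₁ = f₂ := by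
  ext x
  have hone : centralDiv f₁ f₂ h = 1 := Subsingleton.elim _ _
  exact div_eq_one.1 (congrArg Subtype.val (DFunLike.congr_fun hone x))

end CentralDiv

open scoped IsMulCommutative in
instance subsingleton_monoidHom_of_isPerfect {G A : Type*} [Group G] [Group A]
    [Group.IsPerfect G] [IsMulCommutative A] : Subsingleton (G →* A) :=
  subsingleton_of_forall_eq 1 fun f ↦ MonoidHom.ext fun _ ↦
    Abelianization.commutator_subset_ker f Group.IsPerfect.mem_commutator

section InducedCenterAut

variable (G : Type*) [Group G]

/-- The action of `Aut(G)` on `G/Z(G)`, as a homomorphism `Aut(G) → Aut(G/Z(G))`. -/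
def inducedCenterAutHom : MulAut G →* MulAut (G ⧸ Subgroup.center G) :=
  MonoidHom.mk' inducedCenterAut fun _ _ ↦ MulEquiv.ext <| QuotientGroup.mk_surjective.forall.2
    fun _ ↦ rfl

variable {G}

theorem inducedCenterAutHom_conj (g : G) :
    inducedCenterAutHom G (MulAut.conj g) = MulAut.conj (g : G ⧸ Subgroup.center G) :=
  MulEquiv.ext <| QuotientGroup.mk_surjective.forall.2 fun _ ↦ rfl

variable (G)

theorem map_inducedCenterAutHom_range_conj :
    (MulAut.conj : G →* MulAut G).range.map (inducedCenterAutHom G) =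
      (MulAut.conj : (G ⧸ Subgroup.center G) →* MulAut (G ⧸ Subgroup.center G)).range := by
  have hcomp : (inducedCenterAutHom G).comp MulAut.conj =
      MulAut.conj.comp (QuotientGroup.mk' (Subgroup.center G)) :=
    MonoidHom.ext inducedCenterAutHom_conj
  rw [MonoidHom.map_range, hcomp, MonoidHom.range_comp, QuotientGroup.range_mk',
    ← MonoidHom.range_eq_map]

theorem inducedCenterAutHom_injective [Subsingleton (G →* Subgroup.center G)] :
    Function.Injective (inducedCenterAutHom G) := fun α β hαβ ↦ by
  have hdiv (x : G) : α.toMonoidHom x / β.toMonoidHom x ∈ Subgroup.center G :=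
    QuotientGroup.eq_iff_div_mem.1 (DFunLike.congr_fun hαβ (x : G ⧸ Subgroup.center G))
  exact MulEquiv.toMonoidHom_injective (monoidHom_eq_of_div_mem_center hdiv)

/-- The homomorphism `Out(G) → Out(G/Z(G))` sending the class of `α` to the class of the
automorphism induced by `α`. -/
def outCenterQuotientHom :
    (MulAut G ⧸ (MulAut.conj : G →* MulAut G).range) →*
      (MulAut (G ⧸ Subgroup.center G) ⧸
        (MulAut.conj : (G ⧸ Subgroup.center G) →* MulAut (G ⧸ Subgroup.center G)).range) :=
  QuotientGroup.map _ _ (inducedCenterAutHom G)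
    (Subgroup.map_le_iff_le_comap.1 (map_inducedCenterAutHom_range_conj G).le)

theorem outCenterQuotientHom_injective [Subsingleton (G →* Subgroup.center G)] :
    Function.Injective (outCenterQuotientHom G) := by
  rw [← MonoidHom.ker_eq_bot_iff, outCenterQuotientHom, QuotientGroup.ker_map,
    ← map_inducedCenterAutHom_range_conj,
    Subgroup.comap_map_eq_self_of_injective (inducedCenterAutHom_injective G),
    QuotientGroup.map_mk'_self]

end InducedCenterAut

theorem out_injective_into_out_central_quotient_general
    {G : Type*} [Group G] [Subsingleton (G →* Subgroup.center G)] :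
    ∃ f : (MulAut G ⧸ (MulAut.conj : G →* MulAut G).range) →*
        (MulAut (G ⧸ Subgroup.center G) ⧸
          (MulAut.conj : (G ⧸ Subgroup.center G) →* MulAut (G ⧸ Subgroup.center G)).range),
      Function.Injective f ∧
      ∀ α : G ≃* G,
        f (QuotientGroup.mk' _ α) = QuotientGroup.mk' _ (inducedCenterAut α) :=
  ⟨outCenterQuotientHom G, outCenterQuotientHom_injective G, fun _ ↦ rfl⟩

/-- For any group `G` with trivial abelianization there is an injective group
homomorphism from `Out(G)` to `Out(G/Z(G))`, sending the class of an automorphism `α` of `G`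
to the class of the automorphism of `G/Z(G)` induced by `α`. (In particular, if
`Out(G/Z(G))` is trivial then so is `Out(G)`.) -/
theorem out_injective_into_out_central_quotient
    {G : Type*} [Group G] (hG : commutator G = ⊤) :
    ∃ f : (MulAut G ⧸ (MulAut.conj : G →* MulAut G).range) →*
        (MulAut (G ⧸ Subgroup.center G) ⧸
          (MulAut.conj : (G ⧸ Subgroup.center G) →* MulAut (G ⧸ Subgroup.center G)).range),
      Function.Injective f ∧
      ∀ α : G ≃* G,
        f (QuotientGroup.mk' _ α) = QuotientGroup.mk' _ (inducedCenterAut α) := by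
  have : Group.IsPerfect G := ⟨hG⟩
  exact out_injective_into_out_central_quotient_general
end

section
/- Let G be a group equal to its own commutator subgroup, and suppose that every automorphism of G/Z(G) is inner. Then every automorphism of G is inner. -/
/-!
Let `α` be an automorphism of a perfect group `G` which induces on `G ⧸ center G` the conjugation
by the class of `g`. Then `α` and conjugation by `g` agree modulo the center. A commutator depends
only on the classes of its entries modulo the center, so they agree on all commutators, and these
generate `G`.
-/

open scoped commutatorElement

section CentralQuotient

variable {G H : Type*} [Group G] [Group H]

theorem conj_eq_conj_of_mk_center_eq {a b : G} (hab : (a : G ⧸ Subgroup.center G) = b) :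
    MulAut.conj a = MulAut.conj b := by
  have hcentral : a⁻¹ * b ∈ Subgroup.center G := QuotientGroup.eq.mp hab
  ext x
  calc a * x * a⁻¹ = a * (x * (a⁻¹ * b)) * b⁻¹ := by group
    _ = a * ((a⁻¹ * b) * x) * b⁻¹ := by rw [Subgroup.mem_center_iff.mp hcentral x]
    _ = b * x * b⁻¹ := by group

theorem commutatorElement_eq_of_mk_center_eq {a a' b b' : G}
    (ha : (a : G ⧸ Subgroup.center G) = a') (hb : (b : G ⧸ Subgroup.center G) = b') :
    ⁅a, b⁆ = ⁅a', b'⁆ := by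
  calc ⁅a, b⁆ = MulAut.conj a b * b⁻¹ := rfl
    _ = MulAut.conj a' b * b⁻¹ := by rw [conj_eq_conj_of_mk_center_eq ha]
    _ = a' * MulAut.conj b a'⁻¹ := by simp only [MulAut.conj_apply, mul_assoc]
    _ = a' * MulAut.conj b' a'⁻¹ := by rw [conj_eq_conj_of_mk_center_eq hb]
    _ = ⁅a', b'⁆ := by simp only [MulAut.conj_apply, commutatorElement_def, mul_assoc]

theorem commutator_le_eqLocus_of_mk_center_eq {φ ψ : G →* H}
    (hφψ : ∀ x, (φ x : H ⧸ Subgroup.center H) = ψ x) : commutator G ≤ φ.eqLocus ψ := by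
  rw [commutator_def, Subgroup.commutator_le]
  intro a _ b _
  change φ ⁅a, b⁆ = ψ ⁅a, b⁆
  rw [map_commutatorElement, map_commutatorElement]
  exact commutatorElement_eq_of_mk_center_eq (hφψ a) (hφψ b)

theorem monoidHom_eq_of_mk_center_eq [Group.IsPerfect G] {φ ψ : G →* H}
    (hφψ : ∀ x, (φ x : H ⧸ Subgroup.center H) = ψ x) : φ = ψ :=
  MonoidHom.ext fun _ =>
    commutator_le_eqLocus_of_mk_center_eq hφψ Group.IsPerfect.mem_commutator

end CentralQuotient

/-- Let `G` be a group equal to its own commutator subgroup, and suppose that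
every automorphism of `G/Z(G)` is inner. Then every automorphism of `G` is inner. -/
theorem aut_inner_of_central_quotient_aut_inner
    {G : Type*} [Group G] (hG : commutator G = ⊤)
    (h : ∀ β : (G ⧸ Subgroup.center G) ≃* (G ⧸ Subgroup.center G),
      ∃ q : G ⧸ Subgroup.center G, ∀ x, β x = q * x * q⁻¹) :
    ∀ α : G ≃* G, ∃ g : G, ∀ x, α x = g * x * g⁻¹ := by
  intro α
  have : Group.IsPerfect G := ⟨hG⟩
  have map_center : (Subgroup.center G).map (α : G →* G) = Subgroup.center G :=
    Subgroup.characteristic_iff_map_eq.mp inferInstance α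
  obtain ⟨q, hq⟩ := h (QuotientGroup.congr _ _ α map_center)
  obtain ⟨g, rfl⟩ := QuotientGroup.mk_surjective q
  have α_eq_conj : (α : G →* G) = (MulAut.conj g : G ≃* G) :=
    monoidHom_eq_of_mk_center_eq fun x => hq x
  exact ⟨g, DFunLike.congr_fun α_eq_conj⟩
end

section
/- Let G be a group and H ≤ G a Cohen–Lyndon subgroup of G, i.e. there exists a left transversal T of the normal closure ⟪H⟫ of H in G such that the conjugate subgroups {t H t⁻¹ : t ∈ T} generate ⟪H⟫ and the canonical homomorphism from the free product ∗_{t∈T} (t H t⁻¹) to G (induced by the inclusions) is injective. Suppose in addition that H is the internal free product of a family of subgroups (H_λ)_{λ∈Λ}: the H_λ are subgroups of H that generate H, and the canonical homomorphism from the free product ∗_{λ∈Λ} H_λ to G induced by the inclusions is injective with image H. Then the family (H_λ)_{λ∈Λ} has the Cohen–Lyndon property in G: writing N = ⟪⋃_{λ∈Λ} H_λ⟫ = ⟪H⟫, for each λ ∈ Λ there exists a left transversal T_λ of the subgroup generated by H_λ and N in G such that the conjugates {t H_λ t⁻¹ : λ ∈ Λ, t ∈ T_λ} generate N and the canonical homomorphism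 from the free product ∗_{λ∈Λ, t∈T_λ} (t H_λ t⁻¹) to G induced by the inclusions is injective. -/
/-- `T` is a left transversal of the subgroup `K` in `G`: it intersects every left coset of
`K` exactly once. -/
def IsLeftTransversal {G : Type*} [Group G] (T : Set G) (K : Subgroup G) : Prop :=
  ∀ g : G, ∃! t : G, t ∈ T ∧ t⁻¹ * g ∈ K

/-- The conjugate subgroup `t H t⁻¹`. -/
def conjSubgroup {G : Type*} [Group G] (t : G) (H : Subgroup G) : Subgroup G :=
  H.map (MulAut.conj t).toMonoidHom

/-!
Conjugating the decomposition of `H` by each `t ∈ T` decomposes every factor of the free product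
`∗_t tHt⁻¹` as the internal free product of the `tH_λt⁻¹`. Internal free products are associative,
so the `tH_λt⁻¹` together form a free family generating `⟪H⟫`. As `H_λ ≤ ⟪H⟫`, the same
transversal `T` serves every `λ`.
-/

open Monoid Function

section FreeProductMaps

variable {ι κ : Type*} {M : κ → Type*} {N : ι → Type*}
  [∀ k, Monoid (M k)] [∀ i, Monoid (N i)] {e : κ → ι} {f : ∀ k, M k →* N (e k)}

/-- The reduced word obtained by applying `f k` to each letter of a reduced word from `M k` and
viewing the result as a letter from `N (e k)`. It shows that the induced homomorphism of free
products is injective, since it sends normal forms to normal forms. -/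
def reducedWordMap (he : Injective e) (hf : ∀ k, Injective (f k)) (w : CoprodI.Word M) :
    CoprodI.Word N where
  toList := w.toList.map (Sigma.map e fun k => f k)
  ne_one := by
    simp only [List.forall_mem_map]
    exact fun l hl => (map_ne_one_iff (f l.1) (hf l.1)).2 (w.ne_one l hl)
  chain_ne := by
    rw [List.isChain_map]
    exact w.chain_ne.imp fun _ _ => he.ne

theorem reducedWordMap_injective (he : Injective e) (hf : ∀ k, Injective (f k)) :
    Injective (reducedWordMap he hf) := fun _ _ h =>
  CoprodI.Word.ext <| (he.sigma_map hf).list_map <| congrArg CoprodI.Word.toList h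

theorem prod_reducedWordMap (he : Injective e) (hf : ∀ k, Injective (f k)) (w : CoprodI.Word M) :
    (reducedWordMap he hf w).prod =
      CoprodI.lift (fun k => (CoprodI.of (M := N)).comp (f k)) w.prod := by
  simp only [CoprodI.Word.prod, reducedWordMap, List.map_map, map_list_prod]
  congr 2

theorem lift_of_comp_injective (he : Injective e) (hf : ∀ k, Injective (f k)) :
    Injective (CoprodI.lift fun k => (CoprodI.of (M := N)).comp (f k)) := by
  classical
  intro x y hxy
  obtain ⟨v, rfl⟩ := CoprodI.Word.equiv.symm.surjective x
  obtain ⟨w, rfl⟩ := CoprodI.Word.equiv.symm.surjective y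
  have hprod : (reducedWordMap he hf v).prod = (reducedWordMap he hf w).prod := by
    rw [prod_reducedWordMap, prod_reducedWordMap]
    exact hxy
  rw [reducedWordMap_injective he hf (CoprodI.Word.equiv.symm.injective hprod)]

end FreeProductMaps

theorem lift_sigma_of_comp_of_injective {ι : Type*} {κ : ι → Type*} (M : ∀ i, κ i → Type*)
    [∀ i j, Monoid (M i j)] :
    Injective (CoprodI.lift fun p : Σ i, κ i =>
      (CoprodI.of (M := fun i => CoprodI (M i))).comp (CoprodI.of (M := M p.1) (i := p.2))) := by
  let unnest : CoprodI (fun i => CoprodI (M i)) →* CoprodI fun p : Σ i, κ i => M p.1 p.2 :=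
    CoprodI.lift fun i => CoprodI.lift fun j =>
      CoprodI.of (M := fun p : Σ i, κ i => M p.1 p.2) (i := ⟨i, j⟩)
  suffices unnest_comp : unnest.comp (CoprodI.lift fun p : Σ i, κ i => CoprodI.of.comp CoprodI.of) =
      MonoidHom.id _ from LeftInverse.injective (DFunLike.congr_fun unnest_comp)
  ext p x
  simp [unnest]

/-- A family of subgroups of `G` is free if the canonical homomorphism from its free product to `G`
is injective, i.e. if the subgroup it generates is its internal free product. -/
def IsFreeFamily {G ι : Type*} [Group G] (K : ι → Subgroup G) : Prop :=
  Injective (CoprodI.lift fun i => (K i).subtype)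

namespace IsFreeFamily

variable {G ι : Type*} [Group G] {K : ι → Subgroup G}

theorem comp_injective {κ : Type*} (hK : IsFreeFamily K) {e : κ → ι} (he : Injective e) :
    IsFreeFamily fun k => K (e k) := by
  have hfactor : (CoprodI.lift fun k => (K (e k)).subtype) =
      (CoprodI.lift fun i => (K i).subtype).comp
        (CoprodI.lift fun k => (CoprodI.of (M := fun i => K i)).comp (MonoidHom.id (K (e k)))) := by
    ext k x
    simp
  rw [IsFreeFamily, hfactor]
  exact hK.comp (lift_of_comp_injective he fun _ => injective_id)

theorem map {G' : Type*} [Group G'] (hK : IsFreeFamily K) {f : G →* G'} (hf : Injective f) :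
    IsFreeFamily fun i => (K i).map f := by
  let pullback (i : ι) : (K i).map f →* K i := ((K i).equivMapOfInjective f hf).symm
  have hfactor : (CoprodI.lift fun i => ((K i).map f).subtype) =
      (f.comp (CoprodI.lift fun i => (K i).subtype)).comp
        (CoprodI.lift fun i => (CoprodI.of (M := fun i => K i)).comp (pullback i)) := by
    ext i x
    obtain ⟨y, rfl⟩ := ((K i).equivMapOfInjective f hf).surjective x
    simp [pullback]
  rw [IsFreeFamily, hfactor]
  exact (hf.comp hK).comp (lift_of_comp_injective injective_id fun _ => MulEquiv.injective _)

theorem conj (hK : IsFreeFamily K) (t : G) : IsFreeFamily fun i => conjSubgroup t (K i) :=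
  hK.map (MulAut.conj t).injective

theorem sigma {κ : ι → Type*} {L : ∀ i, κ i → Subgroup G} (hK : IsFreeFamily K)
    (hL : ∀ i, IsFreeFamily (L i)) (hLK : ∀ i j, L i j ≤ K i) :
    IsFreeFamily fun p : Σ i, κ i => L p.1 p.2 := by
  let toFactor (i : ι) : CoprodI (fun j => L i j) →* K i :=
    CoprodI.lift fun j => Subgroup.inclusion (hLK i j)
  have subtype_comp_toFactor (i : ι) :
      (K i).subtype.comp (toFactor i) = CoprodI.lift fun j => (L i j).subtype := by
    ext j x
    simp [toFactor]
  have toFactor_injective (i : ι) : Injective (toFactor i) := by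
    refine Injective.of_comp (f := (K i).subtype) ?_
    rw [← MonoidHom.coe_comp, subtype_comp_toFactor]
    exact hL i
  have hfactor : (CoprodI.lift fun p : Σ i, κ i => (L p.1 p.2).subtype) =
      ((CoprodI.lift fun i => (K i).subtype).comp
        (CoprodI.lift fun i => (CoprodI.of (M := fun i => K i)).comp (toFactor i))).comp
        (CoprodI.lift fun p : Σ i, κ i => (CoprodI.of (M := fun i => CoprodI fun j => L i j)).comp
          (CoprodI.of (M := fun j => L p.1 j) (i := p.2))) := by
    ext p x
    simp [toFactor]
  rw [IsFreeFamily, hfactor]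
  exact (hK.comp (lift_of_comp_injective injective_id toFactor_injective)).comp
    (lift_sigma_of_comp_of_injective fun i j => L i j)

end IsFreeFamily

section Subgroups

variable {G ι : Type*} [Group G] (K : ι → Subgroup G)

theorem normalClosure_iUnion_coe :
    Subgroup.normalClosure (⋃ i, (K i : Set G)) =
      Subgroup.normalClosure ((⨆ i, K i : Subgroup G) : Set G) := by
  rw [Subgroup.iSup_eq_closure, Subgroup.normalClosure_closure_eq_normalClosure]

theorem conjSubgroup_iSup (t : G) : conjSubgroup t (⨆ i, K i) = ⨆ i, conjSubgroup t (K i) :=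
  Subgroup.map_iSup _ _

end Subgroups

/-- Let `H ≤ G` be a Cohen–Lyndon subgroup of `G` (there is a left
transversal `T` of the normal closure `⟪H⟫` such that the conjugates `{tHt⁻¹ : t ∈ T}`
generate `⟪H⟫` and the canonical map from their free product to `G` is injective). If `H` is
the internal free product of a family of subgroups `(H_l)`, then the family `(H_l)` has the
Cohen–Lyndon property in `G`. -/
theorem cohenLyndon_of_internal_free_product
    {G : Type*} [Group G] (H : Subgroup G) {Λ : Type*} (Hf : Λ → Subgroup G)
    (hle : ∀ l : Λ, Hf l ≤ H)
    (hgen : (⨆ l : Λ, Hf l) = H)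
    (hfree : Function.Injective (Monoid.CoprodI.lift fun l : Λ => (Hf l).subtype))
    (T : Set G) (hT : IsLeftTransversal T (Subgroup.normalClosure (H : Set G)))
    (hTgen : (⨆ t : T, conjSubgroup (t : G) H) = Subgroup.normalClosure (H : Set G))
    (hTinj : Function.Injective
      (Monoid.CoprodI.lift fun t : T => (conjSubgroup (t : G) H).subtype)) :
    ∃ Tl : Λ → Set G,
      (∀ l : Λ, IsLeftTransversal (Tl l)
        (Hf l ⊔ Subgroup.normalClosure (⋃ l' : Λ, (Hf l' : Set G)))) ∧
      (⨆ p : Σ l : Λ, Tl l, conjSubgroup (p.2 : G) (Hf p.1))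
        = Subgroup.normalClosure (⋃ l' : Λ, (Hf l' : Set G)) ∧
      Function.Injective
        (Monoid.CoprodI.lift
          fun p : Σ l : Λ, Tl l => (conjSubgroup (p.2 : G) (Hf p.1)).subtype) := by
  rw [normalClosure_iUnion_coe, hgen]
  refine ⟨fun _ => T, fun l => ?_, ?_, ?_⟩
  · rwa [sup_eq_right.2 ((hle l).trans Subgroup.le_normalClosure)]
  · calc ⨆ p : Σ _ : Λ, T, conjSubgroup (p.2 : G) (Hf p.1)
        = ⨆ (t : T) (l : Λ), conjSubgroup (t : G) (Hf l) := by rw [iSup_sigma, iSup_comm]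
      _ = ⨆ t : T, conjSubgroup (t : G) H := by simp only [← conjSubgroup_iSup, hgen]
      _ = Subgroup.normalClosure (H : Set G) := hTgen
  · have free_conj (t : T) : IsFreeFamily fun l => conjSubgroup (t : G) (Hf l) :=
      IsFreeFamily.conj hfree t
    have free_all : IsFreeFamily fun p : Σ _ : T, Λ => conjSubgroup (p.1 : G) (Hf p.2) :=
      IsFreeFamily.sigma hTinj free_conj fun _ l => Subgroup.map_mono (hle l)
    let swap : (Σ _ : Λ, T) ≃ Σ _ : T, Λ := (Equiv.sigmaEquivProd Λ T).trans <|
      (Equiv.prodComm Λ T).trans (Equiv.sigmaEquivProd T Λ).symm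
    exact free_all.comp_injective (e := swap) swap.injective
end

section
/- Let W and B be groups, ε : W → B a surjective homomorphism, Λ an index set, and for each λ ∈ Λ and b ∈ B a subgroup A_{λ,b} ≤ W, such that: (i) each A_{λ,b} is contained in ker ε; (ii) any element of A_{λ,b} commutes with any element of A_{μ,c} whenever (λ,b) ≠ (μ,c); (iii) the family of subgroups (A_{λ,b}) is independent (iSupIndep) and its supremum equals ker ε; (iv) w·A_{λ,b}·w⁻¹ = A_{λ, ε(w)b} for all w ∈ W, λ ∈ Λ, b ∈ B. For each λ ∈ Λ let N_λ be a normal subgroup of A_{λ,1}, and let M be the normal closure in W of ⋃_{λ∈Λ} N_λ. Then M ≤ ker ε, so ε induces a surjective homomorphism δ : W/M → B; and writing q : W → W/M for the quotient map, the images q(A_{λ,b}) satisfy the analogues of (i)–(iv) with respect to δ (each q(A_{λ,b}) ≤ ker δ; elements of q(A_{λ,b}) and q(A_{μ,c}) commute for distinct index pairs; the family (q(A_{λ,b})) is independent with supremum ker δ; q(w)·q(A_{λ,b})·q(w)⁻¹ = q(A_{λ, ε(w)b})), and each q(A_{λ,b}) is isomorphic to the quotient group A_{λ,1}/N_λ.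 -/
/-- The normal closure in `W` of the union of a family of subgroups. -/
def unionNormalClosure {W : Type*} [Group W] {Λ : Type*} (N : Λ → Subgroup W) : Subgroup W :=
  Subgroup.normalClosure (⋃ l : Λ, (N l : Set W))

instance unionNormalClosure_normal {W : Type*} [Group W] {Λ : Type*} (N : Λ → Subgroup W) :
    (unionNormalClosure N).Normal :=
  Subgroup.normalClosure_normal

/-!
For `b : B`, the conjugates `w N_λ w⁻¹` with `ε w = b` generate a subgroup `K_{λ,b}` of `A_{λ,b}`,
and the normal closure `M` is the supremum of the `K_{λ,b}`. Since `ker ε` is the internal direct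
sum of the `A_{λ,b}` and `M` is the sum of subgroups of the summands, the summands stay independent
in `W ⧸ M`, and `M ⊓ A_{λ,b} = K_{λ,b}`. Finally `ker ε` normalizes `N_λ`, because `A_{λ,1}` does
and all the other summands centralize it; hence `K_{λ,1} = N_λ`, and `A_{λ,1}` has image
`A_{λ,1} ⧸ N_λ`. Conjugation carries this to every `A_{λ,b}`.
-/

section CommutingSubgroups

variable {G G' ι : Type*} [Group G] [Group G'] {A K : ι → Subgroup G}

open scoped Pointwise in
theorem inf_sup_eq_of_le_normalizer_of_disjoint {H L C : Subgroup G} (hLH : L ≤ H)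
    (hLC : L ≤ Subgroup.normalizer (C : Set G)) (hHC : Disjoint H C) : H ⊓ (L ⊔ C) = L := by
  apply SetLike.coe_injective
  rw [Subgroup.coe_inf, Subgroup.coe_mul_of_left_le_normalizer_right L C hLC, Set.inter_comm,
    ← Subgroup.mul_inf_assoc L C H hLH, hHC.symm.eq_bot, Subgroup.coe_bot, Set.singleton_one,
    mul_one]

theorem le_centralizer_iSup_ne
    (hcomm : Pairwise fun i j => ∀ x ∈ A i, ∀ y ∈ A j, Commute x y) (i : ι) :
    A i ≤ Subgroup.centralizer ((⨆ (j) (_ : j ≠ i), A j : Subgroup G) : Set G) := by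
  rw [Subgroup.le_centralizer_iff]
  exact iSup₂_le fun j hj y hy => Subgroup.mem_centralizer_iff.2
    fun x hx => (hcomm hj.symm x hx y hy).eq

theorem iSup_le_normalizer_of_normal_subgroupOf
    (hcomm : Pairwise fun i j => ∀ x ∈ A i, ∀ y ∈ A j, Commute x y) {i : ι} {N : Subgroup G}
    (hN : N ≤ A i) [(N.subgroupOf (A i)).Normal] :
    ⨆ j, A j ≤ Subgroup.normalizer (N : Set G) := by
  refine iSup_le fun j => ?_
  obtain rfl | hji := eq_or_ne j i
  · exact Subgroup.le_normalizer_of_normal_subgroupOf hN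
  · have hcentral : A j ≤ Subgroup.centralizer (N : Set G) := fun x hx =>
      Subgroup.mem_centralizer_iff.2 fun y hy => (hcomm hji x hx y (hN hy)).eq.symm
    exact hcentral.trans (Subgroup.centralizer_le_normalizer _)

theorem inf_iSup_sup_iSup_ne_eq
    (hcomm : Pairwise fun i j => ∀ x ∈ A i, ∀ y ∈ A j, Commute x y) (hindep : iSupIndep A)
    (hK : ∀ i, K i ≤ A i) (i : ι) : A i ⊓ ((⨆ j, K j) ⊔ ⨆ (j) (_ : j ≠ i), A j) = K i := by
  have hsup : (⨆ j, K j) ⊔ ⨆ (j) (_ : j ≠ i), A j = K i ⊔ ⨆ (j) (_ : j ≠ i), A j := by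
    refine le_antisymm (sup_le (iSup_le fun j => ?_) le_sup_right)
      (sup_le_sup_right (le_iSup K i) _)
    obtain rfl | hji := eq_or_ne j i
    · exact le_sup_left
    · exact (hK j).trans ((le_iSup₂ (f := fun j (_ : j ≠ i) => A j) j hji).trans le_sup_right)
  rw [hsup]
  exact inf_sup_eq_of_le_normalizer_of_disjoint (hK i)
    ((hK i).trans ((le_centralizer_iSup_ne hcomm i).trans (Subgroup.centralizer_le_normalizer _)))
    (hindep i)

theorem iSup_inf_eq_of_pairwise_commute
    (hcomm : Pairwise fun i j => ∀ x ∈ A i, ∀ y ∈ A j, Commute x y) (hindep : iSupIndep A)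
    (hK : ∀ i, K i ≤ A i) (i : ι) : (⨆ j, K j) ⊓ A i = K i := by
  refine le_antisymm ?_ (le_inf (le_iSup K i) (hK i))
  calc (⨆ j, K j) ⊓ A i ≤ A i ⊓ ((⨆ j, K j) ⊔ ⨆ (j) (_ : j ≠ i), A j) :=
        le_inf inf_le_right (inf_le_left.trans le_sup_left)
    _ = K i := inf_iSup_sup_iSup_ne_eq hcomm hindep hK i

theorem iSupIndep_map_of_ker_eq_iSup
    (hcomm : Pairwise fun i j => ∀ x ∈ A i, ∀ y ∈ A j, Commute x y) (hindep : iSupIndep A)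
    (hK : ∀ i, K i ≤ A i) {f : G →* G'} (hf : f.ker = ⨆ i, K i) :
    iSupIndep fun i => (A i).map f := by
  intro i
  simp only [← Subgroup.map_iSup, Subgroup.disjoint_def]
  rintro _ ⟨x, hxA, rfl⟩ hfx
  have hx : x ∈ f.ker ⊔ ⨆ (j) (_ : j ≠ i), A j := by
    rwa [sup_comm, ← Subgroup.comap_map_eq, Subgroup.mem_comap]
  have hxK : x ∈ K i := by
    rw [← inf_iSup_sup_iSup_ne_eq hcomm hindep hK i, ← hf]
    exact ⟨hxA, hx⟩
  exact f.mem_ker.1 (hf ▸ le_iSup K i hxK)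

end CommutingSubgroups

section SubgroupImages

variable {G G' : Type*} [Group G] [Group G']

theorem map_map_conj_apply (f : G →* G') (H : Subgroup G) (w : G) :
    (H.map f).map (MulAut.conj (f w)).toMonoidHom =
      (H.map (MulAut.conj w).toMonoidHom).map f := by
  have hcomp : (MulAut.conj (f w)).toMonoidHom.comp f = f.comp (MulAut.conj w).toMonoidHom := by
    ext x
    simp
  rw [Subgroup.map_map, Subgroup.map_map, hcomp]

/-- The first isomorphism theorem for the restriction of `f` to a subgroup `H`, with the kernel
`f.ker ⊓ H` of the restriction replaced by an equal subgroup `N` of the ambient group. -/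
noncomputable def mapEquivQuotientSubgroupOf (f : G →* G') {H N : Subgroup G}
    [(N.subgroupOf H).Normal] (hN : f.ker ⊓ H = N) : H.map f ≃* H ⧸ N.subgroupOf H :=
  have hker : (f.subgroupMap H).ker = N.subgroupOf H := by
    rw [Subgroup.ker_subgroupMap, ← hN, Subgroup.inf_subgroupOf_right]
  ((QuotientGroup.quotientMulEquivOfEq hker.symm).trans
    (QuotientGroup.quotientKerEquivOfSurjective _ (f.subgroupMap_surjective H))).symm

end SubgroupImages

section ConjugatesOver

variable {W B Λ : Type*} [Group W] [Group B]

/-- The subgroup `K_{λ,b}` generated by the conjugates of `H = N_λ` by all elements of the fibre of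
`ε` over `b`. Taking the whole fibre avoids choosing a section of `ε`. -/
def conjugatesOver (ε : W →* B) (H : Subgroup W) (b : B) : Subgroup W :=
  ⨆ (w : W) (_ : ε w = b), H.map (MulAut.conj w).toMonoidHom

theorem conjugatesOver_one {ε : W →* B} {H : Subgroup W}
    (hH : ε.ker ≤ Subgroup.normalizer (H : Set W)) : conjugatesOver ε H 1 = H := by
  apply le_antisymm
  · refine iSup₂_le fun w hw => ?_
    rintro _ ⟨x, hx, rfl⟩
    exact Subgroup.le_normalizer_iff.1 hH w hw x hx
  · refine le_iSup₂_of_le (1 : W) (map_one ε) fun x hx => ⟨x, hx, ?_⟩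
    simp

theorem unionNormalClosure_eq_iSup_conjugatesOver (ε : W →* B) (N : Λ → Subgroup W) :
    unionNormalClosure N = ⨆ p : Λ × B, conjugatesOver ε (N p.1) p.2 := by
  apply le_antisymm
  · refine (Subgroup.closure_le _).2 fun x hx => ?_
    obtain ⟨n, hn, hconj⟩ := Group.mem_conjugatesOfSet_iff.1 hx
    obtain ⟨l, hnl⟩ := Set.mem_iUnion.1 hn
    obtain ⟨w, rfl⟩ := isConj_iff.1 hconj
    have hle : (N l).map (MulAut.conj w).toMonoidHom ≤ conjugatesOver ε (N l) (ε w) :=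
      le_iSup₂_of_le w rfl le_rfl
    exact le_iSup (fun p : Λ × B => conjugatesOver ε (N p.1) p.2) (l, ε w)
      (hle ⟨n, hnl, rfl⟩)
  · refine iSup_le fun p => iSup₂_le fun w _ => ?_
    rintro _ ⟨n, hn, rfl⟩
    have hnM : n ∈ unionNormalClosure N :=
      Subgroup.subset_normalClosure (Set.mem_iUnion.2 ⟨p.1, hn⟩)
    exact (unionNormalClosure_normal N).conj_mem n hnM w

end ConjugatesOver

/-- The family `A` makes `ε : W →* B` a regular generalized wreath-like product, i.e. conditions
(i)–(iv) hold; the two halves of (iii) are the fields `indep` and `iSup_eq`. -/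
structure IsRegularGWP {W B Λ : Type*} [Group W] [Group B] (ε : W →* B)
    (A : Λ → B → Subgroup W) : Prop where
  surjective : Function.Surjective ε
  le_ker : ∀ l b, A l b ≤ ε.ker
  commute : Pairwise fun p q : Λ × B => ∀ x ∈ A p.1 p.2, ∀ y ∈ A q.1 q.2, Commute x y
  indep : iSupIndep fun p : Λ × B => A p.1 p.2
  iSup_eq : ⨆ p : Λ × B, A p.1 p.2 = ε.ker
  map_conj : ∀ w l b, (A l b).map (MulAut.conj w).toMonoidHom = A l (ε w * b)

namespace IsRegularGWP

variable {W V B Λ : Type*} [Group W] [Group V] [Group B] {ε : W →* B} {A : Λ → B → Subgroup W}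

theorem nonempty_mulEquiv (h : IsRegularGWP ε A) (l : Λ) (b c : B) :
    Nonempty (A l b ≃* A l c) := by
  obtain ⟨w, hw⟩ := h.surjective (c * b⁻¹)
  have hconj : (A l b).map (MulAut.conj w).toMonoidHom = A l c := by
    rw [h.map_conj, hw, inv_mul_cancel_right]
  exact ⟨((MulAut.conj w).subgroupMap (A l b)).trans (MulEquiv.subgroupCongr hconj)⟩

theorem conjugatesOver_le (h : IsRegularGWP ε A) {l : Λ} {H : Subgroup W} (hH : H ≤ A l 1)
    (b : B) : conjugatesOver ε H b ≤ A l b := by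
  refine iSup₂_le fun w hw => (Subgroup.map_mono hH).trans (h.map_conj w l 1).le |>.trans ?_
  rw [hw, mul_one]

theorem ker_le_normalizer (h : IsRegularGWP ε A) {l : Λ} {b : B} {N : Subgroup W}
    (hN : N ≤ A l b) [(N.subgroupOf (A l b)).Normal] :
    ε.ker ≤ Subgroup.normalizer (N : Set W) :=
  h.iSup_eq ▸
    iSup_le_normalizer_of_normal_subgroupOf (A := fun p : Λ × B => A p.1 p.2) (i := (l, b))
      h.commute hN

theorem unionNormalClosure_le_ker (h : IsRegularGWP ε A) {N : Λ → Subgroup W}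
    (hN : ∀ l, N l ≤ A l 1) : unionNormalClosure N ≤ ε.ker :=
  Subgroup.normalClosure_le_normal (Set.iUnion_subset fun l => (hN l).trans (h.le_ker l 1))

theorem unionNormalClosure_inf_eq (h : IsRegularGWP ε A) {N : Λ → Subgroup W}
    (hN : ∀ l, N l ≤ A l 1) [∀ l, ((N l).subgroupOf (A l 1)).Normal] (l : Λ) :
    unionNormalClosure N ⊓ A l 1 = N l := by
  rw [unionNormalClosure_eq_iSup_conjugatesOver ε N,
    iSup_inf_eq_of_pairwise_commute h.commute h.indep
      (fun p => h.conjugatesOver_le (hN p.1) p.2) (l, 1),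
    conjugatesOver_one (h.ker_le_normalizer (hN l))]

protected theorem map {f : W →* V} {δ : V →* B} (h : IsRegularGWP (δ.comp f) A)
    (hf : Function.Surjective f) {K : Λ × B → Subgroup W} (hK : ∀ p, K p ≤ A p.1 p.2)
    (hker : f.ker = ⨆ p, K p) : IsRegularGWP δ fun l b => (A l b).map f where
  surjective := Function.Surjective.of_comp (g := f) h.surjective
  le_ker l b := Subgroup.map_le_iff_le_comap.2 (h.le_ker l b)
  commute := by
    rintro p q hpq _ ⟨x, hx, rfl⟩ _ ⟨y, hy, rfl⟩
    exact (h.commute hpq x hx y hy).map f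
  indep := iSupIndep_map_of_ker_eq_iSup h.commute h.indep hK hker
  iSup_eq := by
    rw [← Subgroup.map_iSup, h.iSup_eq, ← MonoidHom.comap_ker,
      Subgroup.map_comap_eq_self_of_surjective hf]
  map_conj v l b := by
    obtain ⟨w, rfl⟩ := hf v
    rw [map_map_conj_apply, h.map_conj, MonoidHom.comp_apply]

theorem map_mk'_unionNormalClosure (h : IsRegularGWP ε A) {N : Λ → Subgroup W}
    (hN : ∀ l, N l ≤ A l 1) :
    IsRegularGWP (QuotientGroup.lift (unionNormalClosure N) ε (h.unionNormalClosure_le_ker hN))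
      fun l b => (A l b).map (QuotientGroup.mk' (unionNormalClosure N)) := by
  refine IsRegularGWP.map (f := QuotientGroup.mk' (unionNormalClosure N)) h
    (QuotientGroup.mk'_surjective _) (fun p => h.conjugatesOver_le (hN p.1) p.2) ?_
  rw [QuotientGroup.ker_mk', unionNormalClosure_eq_iSup_conjugatesOver ε N]

theorem nonempty_map_mk'_mulEquiv_quotient (h : IsRegularGWP ε A) {N : Λ → Subgroup W}
    (hN : ∀ l, N l ≤ A l 1) [∀ l, ((N l).subgroupOf (A l 1)).Normal] (l : Λ) (b : B) :
    Nonempty ((A l b).map (QuotientGroup.mk' (unionNormalClosure N)) ≃*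
      A l 1 ⧸ (N l).subgroupOf (A l 1)) := by
  obtain ⟨toFibreOne⟩ := (h.map_mk'_unionNormalClosure hN).nonempty_mulEquiv l b 1
  have hker : (QuotientGroup.mk' (unionNormalClosure N)).ker ⊓ A l 1 = N l := by
    rw [QuotientGroup.ker_mk', h.unionNormalClosure_inf_eq hN]
  exact ⟨toFibreOne.trans (mapEquivQuotientSubgroupOf _ hker)⟩

end IsRegularGWP

/-- Let `W`, `B` be groups, `ε : W → B` a surjective homomorphism and
`A : Λ → B → Subgroup W` subgroups satisfying the axioms (i)–(iv) of a regular generalized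
wreath-like product.  For each `l` let `N l` be a normal subgroup of `A l 1`, and let `M` be
the normal closure in `W` of `⋃ l, N l`.  Then `M ≤ ker ε`, so `ε` induces a surjective
homomorphism `δ : W/M → B`, the images of the `A l b` in `W/M` satisfy the analogues of
(i)–(iv) with respect to `δ`, and each image is isomorphic to `A l 1 / N l`. -/
theorem regular_gwp_quotient_by_normal_subgroups
    {W B : Type*} [Group W] [Group B] {Λ : Type*}
    (ε : W →* B) (hsurj : Function.Surjective ε)
    (A : Λ → B → Subgroup W)
    (hker : ∀ (l : Λ) (b : B), A l b ≤ ε.ker)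
    (hcomm : ∀ p q : Λ × B, p ≠ q → ∀ x ∈ A p.1 p.2, ∀ y ∈ A q.1 q.2, Commute x y)
    (hindep : iSupIndep fun p : Λ × B => A p.1 p.2)
    (hsup : (⨆ p : Λ × B, A p.1 p.2) = ε.ker)
    (hconj : ∀ (w : W) (l : Λ) (b : B),
      (A l b).map (MulAut.conj w).toMonoidHom = A l (ε w * b))
    (N : Λ → Subgroup W) (hNle : ∀ l : Λ, N l ≤ A l 1)
    [hNnorm : ∀ l : Λ, ((N l).subgroupOf (A l 1)).Normal] :
    unionNormalClosure N ≤ ε.ker ∧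
    ∃ δ : (W ⧸ unionNormalClosure N) →* B,
      Function.Surjective δ ∧
      (∀ w : W, δ (QuotientGroup.mk' (unionNormalClosure N) w) = ε w) ∧
      (∀ (l : Λ) (b : B), (A l b).map (QuotientGroup.mk' (unionNormalClosure N)) ≤ δ.ker) ∧
      (∀ p q : Λ × B, p ≠ q →
        ∀ x ∈ (A p.1 p.2).map (QuotientGroup.mk' (unionNormalClosure N)),
        ∀ y ∈ (A q.1 q.2).map (QuotientGroup.mk' (unionNormalClosure N)), Commute x y) ∧
      iSupIndep (fun p : Λ × B => (A p.1 p.2).map (QuotientGroup.mk' (unionNormalClosure N))) ∧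
      (⨆ p : Λ × B, (A p.1 p.2).map (QuotientGroup.mk' (unionNormalClosure N))) = δ.ker ∧
      (∀ (w : W) (l : Λ) (b : B),
        ((A l b).map (QuotientGroup.mk' (unionNormalClosure N))).map
            (MulAut.conj (QuotientGroup.mk' (unionNormalClosure N) w)).toMonoidHom
          = (A l (ε w * b)).map (QuotientGroup.mk' (unionNormalClosure N))) ∧
      ∀ (l : Λ) (b : B),
        Nonempty
          (((A l b).map (QuotientGroup.mk' (unionNormalClosure N)))
            ≃* (↥(A l 1) ⧸ (N l).subgroupOf (A l 1))) := by
  have h : IsRegularGWP ε A := ⟨hsurj, hker, fun p q => hcomm p q, hindep, hsup, hconj⟩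
  have hquot := h.map_mk'_unionNormalClosure hNle
  exact ⟨h.unionNormalClosure_le_ker hNle, _, hquot.surjective, fun _ => rfl, hquot.le_ker,
    fun _ _ hpq => hquot.commute hpq, hquot.indep, hquot.iSup_eq,
    fun w => hquot.map_conj (QuotientGroup.mk' _ w), h.nonempty_map_mk'_mulEquiv_quotient hNle⟩
end

section
/- Let G be a group, Z a subgroup of the center of G, and ε : G → W a surjective group homomorphism with kernel Z. Let σ : W → G be a set-theoretic section of ε (i.e. ε ∘ σ = id_W), and define c : W × W → Z by c(g,h) = σ(g)σ(h)σ(gh)⁻¹ (which indeed lies in Z). Let W₀ ≤ W be a subgroup of finite index, and assume that the abelianization of the subgroup ε⁻¹(W₀) of G is finite (this holds, for instance, when G has property (T)). Then the subgroup of G generated by σ(W₀) together with {c(g,h) : g, h ∈ W₀} has finite index in G. -/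
/-!
Commutators do not see central factors, so a subgroup `H` that covers `K` modulo the center
contains `⁅K, K⁆`. If `K` has finite abelianization, then `⁅K, K⁆` has finite index in `K`,
and hence `H` has finite index in `G` as soon as `K` does. For `K = ε⁻¹(W₀)` and `ker ε` central,
`H` covers `K` modulo the center once `ε(H)` contains `W₀`; the values of a section over `W₀`
generate such an `H`.
-/

section

open scoped commutatorElement

variable {G : Type*} [Group G]

theorem commutatorElement_mul_left_of_mem_center {z : G} (hz : z ∈ Subgroup.center G) (g h : G) :
    ⁅g * z, h⁆ = ⁅g, h⁆ := by
  have hzh : ⁅z, h⁆ = 1 :=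
    commutatorElement_eq_one_iff_mul_comm.mpr (Subgroup.mem_center_iff.mp hz h).symm
  rw [commutatorElement_mul_left_eq_conj_mul, hzh, mul_one, mul_inv_cancel, one_mul]

theorem commutator_sup_center_left (H K : Subgroup G) : ⁅H ⊔ Subgroup.center G, K⁆ = ⁅H, K⁆ := by
  refine le_antisymm (Subgroup.commutator_le.mpr fun x hx k hk ↦ ?_)
    (Subgroup.commutator_mono le_sup_left le_rfl)
  obtain ⟨h, hh, z, hz, rfl⟩ := Subgroup.mem_sup_of_normal_right.mp hx
  rw [commutatorElement_mul_left_of_mem_center hz]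
  exact Subgroup.commutator_mem_commutator hh hk

theorem commutator_sup_center_right (H K : Subgroup G) : ⁅H, K ⊔ Subgroup.center G⁆ = ⁅H, K⁆ := by
  rw [Subgroup.commutator_comm, commutator_sup_center_left, Subgroup.commutator_comm]

theorem commutator_self_le_of_le_sup_center {H K : Subgroup G} (hK : K ≤ H ⊔ Subgroup.center G) :
    ⁅K, K⁆ ≤ H :=
  calc ⁅K, K⁆ ≤ ⁅H ⊔ Subgroup.center G, H ⊔ Subgroup.center G⁆ := Subgroup.commutator_mono hK hK
    _ = ⁅H, H⁆ := by rw [commutator_sup_center_left, commutator_sup_center_right]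
    _ ≤ H := H.commutator_le_self

theorem relIndex_commutator_self (K : Subgroup G) :
    ⁅K, K⁆.relIndex K = Nat.card (Abelianization K) := by
  rw [← K.map_subtype_commutator, Subgroup.relIndex, Subgroup.subgroupOf,
    Subgroup.comap_map_eq_self_of_injective K.subtype_injective]
  rfl

theorem finiteIndex_commutator_self (K : Subgroup G) [K.FiniteIndex] [Finite (Abelianization K)] :
    ⁅K, K⁆.FiniteIndex := by
  refine ⟨?_⟩
  rw [← Subgroup.relIndex_mul_index K.commutator_le_self, relIndex_commutator_self]
  exact mul_ne_zero Nat.card_pos.ne' Subgroup.FiniteIndex.index_ne_zero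

theorem finiteIndex_of_le_sup_center {H K : Subgroup G} [K.FiniteIndex]
    [Finite (Abelianization K)] (hK : K ≤ H ⊔ Subgroup.center G) : H.FiniteIndex :=
  have := finiteIndex_commutator_self K
  Subgroup.finiteIndex_of_le (commutator_self_le_of_le_sup_center hK)

theorem finiteIndex_comap {W : Type*} [Group W] (ε : G →* W) (W₀ : Subgroup W) [W₀.FiniteIndex] :
    (W₀.comap ε).FiniteIndex := by
  refine ⟨?_⟩
  rw [Subgroup.index_comap]
  exact Subgroup.isFiniteRelIndex_of_finiteIndex.relIndex_ne_zero

theorem closure_section_and_cocycle_finiteIndex_general {W : Type*} [Group W] {ε : G →* W}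
    (hε : ε.ker ≤ Subgroup.center G) {W₀ : Subgroup W} [W₀.FiniteIndex]
    [Finite (Abelianization (W₀.comap ε))] {H : Subgroup G} (hH : W₀ ≤ H.map ε) :
    H.FiniteIndex :=
  have := finiteIndex_comap ε W₀
  finiteIndex_of_le_sup_center <|
    calc W₀.comap ε ≤ (H.map ε).comap ε := Subgroup.comap_mono hH
      _ = H ⊔ ε.ker := Subgroup.comap_map_eq ε H
      _ ≤ H ⊔ Subgroup.center G := sup_le_sup_left hε H

end

/-- Let `G` be a group, `Z` a subgroup of the center of `G`, and `ε : G → W`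
a surjective group homomorphism with kernel `Z`. Let `σ : W → G` be a set-theoretic section of
`ε`, and define `c : W × W → Z` by `c(g,h) = σ(g)σ(h)σ(gh)⁻¹` (which indeed lies in `Z`). Let
`W₀ ≤ W` be a subgroup of finite index, and assume that the abelianization of the subgroup
`ε⁻¹(W₀)` of `G` is finite. Then the subgroup of `G` generated by `σ(W₀)` together with
`{c(g,h) : g, h ∈ W₀}` has finite index in `G`. -/
theorem closure_section_and_cocycle_finiteIndex
    {G W : Type*} [Group G] [Group W] (Z : Subgroup G) (hZ : Z ≤ Subgroup.center G)
    (ε : G →* W) (hsurj : Function.Surjective ε) (hker : ε.ker = Z)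
    (σ : W → G) (hσ : ∀ w : W, ε (σ w) = w)
    (c : W → W → G) (hc : ∀ g h : W, c g h = σ g * σ h * (σ (g * h))⁻¹)
    (hcZ : ∀ g h : W, c g h ∈ Z)
    (W₀ : Subgroup W) (hfi : W₀.FiniteIndex)
    (hab : Finite (Abelianization (W₀.comap ε))) :
    (Subgroup.closure
        (σ '' (W₀ : Set W) ∪ {x : G | ∃ g ∈ W₀, ∃ h ∈ W₀, x = c g h})).FiniteIndex :=
  closure_section_and_cocycle_finiteIndex_general (hker.trans_le hZ) fun w hw ↦
    ⟨σ w, Subgroup.subset_closure (Or.inl ⟨w, hw, rfl⟩), hσ w⟩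
end

section
/- Let G be a group and c : G × G → 𝕋 a map with values in the circle group satisfying the 2-cocycle identity c(g,h)·c(gh,k) = c(h,k)·c(g,hk) for all g,h,k ∈ G, and c(1,1) = 1. Then there exists a map f : G → 𝕋 with f(1) = 1 and f(g) = f(g⁻¹) for all g, such that the cohomologous map c'(g,h) := c(g,h)·f(g)·f(h)·f(gh)⁻¹ again satisfies the 2-cocycle identity and moreover c'(g,g⁻¹) = 1 for all g ∈ G. -/
/-!
The cocycle identity at `(g, g⁻¹, g)` shows that `c g g⁻¹` does not change when `g` is replaced by
`g⁻¹`. Hence, for any choice `s` of square roots with `s 1 = 1`, the function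
`f g = (s (c g g⁻¹))⁻¹` is invariant under inversion, and twisting `c` by its coboundary multiplies
`c g g⁻¹` by `f g * f g⁻¹ = (c g g⁻¹)⁻¹`.
-/

section Definitions

variable {G A : Type*} [Mul G] [Mul A]

/-- A 2-cocycle on `G` with values in `A`, on which `G` is understood to act trivially. Mathlib's
`groupCohomology.IsMulCocycle₂` takes the action from an instance, which `Circle` does not carry
for an arbitrary group; here the action is left out and the cocycle is curried. -/
def IsTwoCocycle (c : G → G → A) : Prop :=
  ∀ g h k : G, c g h * c (g * h) k = c h k * c g (h * k)

/-- The product of `c` with the coboundary of `f`: for a 2-cocycle `c`, these are the maps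
cohomologous to `c`. -/
def coboundaryTwist [Inv A] (c : G → G → A) (f : G → A) (g h : G) : A :=
  c g h * f g * f h * (f (g * h))⁻¹

end Definitions

namespace IsTwoCocycle

variable {G A : Type*}

section RightCancel

variable [Mul A] [IsRightCancelMul A] {c : G → G → A}

theorem map_one_left [MulOneClass G] (hc : IsTwoCocycle c) (g : G) : c 1 g = c 1 1 := by
  simpa only [one_mul, mul_left_inj] using (hc 1 1 g).symm

theorem map_one_right [MulOneClass G] (hc : IsTwoCocycle c) (g : G) : c g 1 = c 1 1 := by
  simpa only [mul_one, mul_left_inj] using hc g 1 1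

theorem map_inv_right_eq_map_inv_left [Group G] (hc : IsTwoCocycle c) (g : G) :
    c g g⁻¹ = c g⁻¹ g := by
  simpa only [mul_inv_cancel, inv_mul_cancel, hc.map_one_left g, hc.map_one_right g,
    mul_left_inj] using hc g g⁻¹ g

end RightCancel

theorem coboundaryTwist [Semigroup G] [CommGroup A] {c : G → G → A} (hc : IsTwoCocycle c)
    (f : G → A) : IsTwoCocycle (coboundaryTwist c f) := by
  intro g h k
  calc c g h * f g * f h * (f (g * h))⁻¹ * (c (g * h) k * f (g * h) * f k * (f (g * h * k))⁻¹)
      = c g h * c (g * h) k * (f g * f h * f k * (f (g * h * k))⁻¹) *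
          (f (g * h) * (f (g * h))⁻¹) := by ac_rfl
    _ = c h k * c g (h * k) * (f g * f h * f k * (f (g * (h * k)))⁻¹) *
          (f (h * k) * (f (h * k))⁻¹) := by
        rw [hc g h k, mul_assoc g h k, mul_inv_cancel, mul_inv_cancel]
    _ = c h k * f h * f k * (f (h * k))⁻¹ *
          (c g (h * k) * f g * f (h * k) * (f (g * (h * k)))⁻¹) := by ac_rfl

end IsTwoCocycle

theorem exists_map_one_and_mul_self_eq_of_isSquare (A : Type*) [CommGroup A] :
    ∃ s : A → A, s 1 = 1 ∧ ∀ a, IsSquare a → s a * s a = a := by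
  have exists_root (a : A) (ha : IsSquare a) : ∃ r, a = r * r := ha
  choose! r hr using exists_root
  have hr_one : r 1 * r 1 = 1 := (hr 1 IsSquare.one).symm
  refine ⟨fun a ↦ r a / r 1, div_self' _, fun a ha ↦ ?_⟩
  rw [div_mul_div_comm, hr_one, div_one, ← hr a ha]

theorem exists_normalization_of_cocycle_general {G A : Type*} [Group G] [CommGroup A]
    {c : G → G → A} (hc : IsTwoCocycle c) (h1 : c 1 1 = 1)
    (hsq : ∀ g : G, IsSquare (c g g⁻¹)) :
    ∃ f : G → A, f 1 = 1 ∧ (∀ g : G, f g = f g⁻¹) ∧ IsTwoCocycle (coboundaryTwist c f) ∧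
      ∀ g : G, coboundaryTwist c f g g⁻¹ = 1 := by
  obtain ⟨s, hs_one, hs⟩ := exists_map_one_and_mul_self_eq_of_isSquare A
  let f : G → A := fun g ↦ (s (c g g⁻¹))⁻¹
  have hf_one : f 1 = 1 := by simp only [f, inv_one, h1, hs_one]
  have hf_inv (g : G) : f g = f g⁻¹ := by
    simp only [f, inv_inv, hc.map_inv_right_eq_map_inv_left g]
  have hf_mul_self (g : G) : f g * f g = (c g g⁻¹)⁻¹ := by
    rw [← mul_inv, hs _ (hsq g)]
  refine ⟨f, hf_one, hf_inv, hc.coboundaryTwist f, fun g ↦ ?_⟩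
  calc c g g⁻¹ * f g * f g⁻¹ * (f (g * g⁻¹))⁻¹
      = c g g⁻¹ * (f g * f g) := by
        rw [mul_inv_cancel, hf_one, inv_one, mul_one, ← hf_inv, mul_assoc]
    _ = 1 := by rw [hf_mul_self, mul_inv_cancel]

theorem isSquare_circle (z : Circle) : IsSquare z :=
  ⟨Circle.exp (Complex.arg z / 2), by rw [← Circle.exp_add, add_halves, Circle.exp_arg]⟩

/-- Let `G` be a group and `c : G × G → 𝕋` a circle-valued 2-cocycle with
`c(1,1) = 1`. Then there exists `f : G → 𝕋` with `f(1) = 1` and `f(g) = f(g⁻¹)` for all `g`,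
such that the cohomologous map `c'(g,h) := c(g,h)·f(g)·f(h)·f(gh)⁻¹` again satisfies the
2-cocycle identity and moreover `c'(g,g⁻¹) = 1` for all `g ∈ G`. -/
theorem exists_normalization_of_cocycle
    {G : Type*} [Group G] (c : G → G → Circle)
    (hc : ∀ g h k : G, c g h * c (g * h) k = c h k * c g (h * k))
    (h1 : c 1 1 = 1) :
    ∃ f : G → Circle, f 1 = 1 ∧ (∀ g : G, f g = f g⁻¹) ∧
      (∀ g h k : G,
        (c g h * f g * f h * (f (g * h))⁻¹) * (c (g * h) k * f (g * h) * f k * (f (g * h * k))⁻¹)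
          = (c h k * f h * f k * (f (h * k))⁻¹) *
            (c g (h * k) * f g * f (h * k) * (f (g * (h * k)))⁻¹)) ∧
      (∀ g : G, c g g⁻¹ * f g * f g⁻¹ * (f (g * g⁻¹))⁻¹ = 1) :=
  exists_normalization_of_cocycle_general hc h1 fun g ↦ isSquare_circle (c g g⁻¹)
end

section
/- Let W and B be groups, ε : W → B a surjective homomorphism, Λ an index set, and for each λ ∈ Λ and b ∈ B a subgroup A_{λ,b} ≤ W, such that: (i) each A_{λ,b} is contained in ker ε; (ii) any element of A_{λ,b} commutes with any element of A_{μ,c} whenever (λ,b) ≠ (μ,c); (iii) the subgroups A_{λ,b} together generate ker ε; (iv) w·A_{λ,b}·w⁻¹ = A_{λ, ε(w)b} for all w ∈ W, λ ∈ Λ, b ∈ B. Fix λ₀ ∈ Λ and let N be a normal subgroup of A_{λ₀,1}. Then: (1) N is a normal subgroup of ker ε; and (2) for any u, v ∈ W with ε(u) = ε(v), one has u·N·u⁻¹ = v·N·v⁻¹, so the conjugate u·N·u⁻¹ depends only on ε(u). -/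
section

open Subgroup

variable {G : Type*} [Group G] {N : Subgroup G}

theorem iSup_le_normalizer_of_le_centralizer {ι : Sort*} {H : ι → Subgroup G} (i₀ : ι)
    (hnorm : H i₀ ≤ normalizer N) (hcent : ∀ i, i ≠ i₀ → H i ≤ centralizer N) :
    ⨆ i, H i ≤ normalizer N := by
  refine iSup_le fun i => ?_
  obtain rfl | hi := eq_or_ne i i₀
  · exact hnorm
  · exact (hcent i hi).trans (centralizer_le_normalizer _)

theorem map_conj_mul (N : Subgroup G) (g h : G) :
    N.map (MulAut.conj (g * h)).toMonoidHom =
      (N.map (MulAut.conj h).toMonoidHom).map (MulAut.conj g).toMonoidHom := by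
  rw [map_mul, Subgroup.map_map]
  rfl

theorem map_conj_eq_map_conj_iff {u v : G} :
    N.map (MulAut.conj u).toMonoidHom = N.map (MulAut.conj v).toMonoidHom ↔
      v⁻¹ * u ∈ normalizer (N : Set G) := by
  have conj_u_eq : N.map (MulAut.conj u).toMonoidHom =
      (N.map (MulAut.conj (v⁻¹ * u)).toMonoidHom).map (MulAut.conj v).toMonoidHom := by
    rw [← map_conj_mul, mul_inv_cancel_left]
  rw [conj_u_eq, mem_normalizer_iff_map_conj_eq]
  exact (map_injective (MulAut.conj v).injective).eq_iff

theorem conj_of_normal_in_base_depends_only_on_image_general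
    {M : Type*} [MulOneClass M] {ι : Sort*} {ε : G →* M} {H : ι → Subgroup G}
    (hgen : ε.ker ≤ ⨆ i, H i) (i₀ : ι)
    (hnorm : ∀ a ∈ H i₀, ∀ n ∈ N, a * n * a⁻¹ ∈ N)
    (hcomm : ∀ i, i ≠ i₀ → ∀ x ∈ H i, ∀ n ∈ N, Commute x n) :
    (∀ k ∈ ε.ker, ∀ n ∈ N, k * n * k⁻¹ ∈ N) ∧
      ∀ u v : G, ε u = ε v →
        N.map (MulAut.conj u).toMonoidHom = N.map (MulAut.conj v).toMonoidHom := by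
  have hcent : ∀ i, i ≠ i₀ → H i ≤ centralizer N :=
    fun i hi x hx n hn => (hcomm i hi x hx n hn).symm
  have hker : ε.ker ≤ normalizer N :=
    hgen.trans (iSup_le_normalizer_of_le_centralizer i₀ (le_normalizer_iff.mpr hnorm) hcent)
  exact ⟨le_normalizer_iff.mp hker, fun u v huv =>
    map_conj_eq_map_conj_iff.mpr (hker (ε.eq_iff.mp huv))⟩

end

/-- Let `W`, `B` be groups, `ε : W → B` surjective, `Λ` an index set, and for
each `λ ∈ Λ`, `b ∈ B` a subgroup `A λ b ≤ W` satisfying conditions (i)–(iv) of a regular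
generalized wreath-like product (with (iii) weakened to generation). Fix `l₀ ∈ Λ` and let `N`
be a normal subgroup of `A l₀ 1`. Then (1) `N` is a normal subgroup of `ker ε`; and (2) for any
`u, v ∈ W` with `ε u = ε v`, one has `u·N·u⁻¹ = v·N·v⁻¹`. -/
theorem conj_of_normal_in_base_depends_only_on_image
    {W B : Type*} [Group W] [Group B] {Λ : Type*}
    (ε : W →* B) (hsurj : Function.Surjective ε)
    (A : Λ → B → Subgroup W)
    (hker : ∀ (l : Λ) (b : B), A l b ≤ ε.ker)
    (hcomm : ∀ p q : Λ × B, p ≠ q → ∀ x ∈ A p.1 p.2, ∀ y ∈ A q.1 q.2, Commute x y)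
    (hgen : (⨆ p : Λ × B, A p.1 p.2) = ε.ker)
    (hconj : ∀ (w : W) (l : Λ) (b : B),
      (A l b).map (MulAut.conj w).toMonoidHom = A l (ε w * b))
    (l₀ : Λ) (N : Subgroup W) (hN : N ≤ A l₀ 1)
    (hNnorm : ∀ a ∈ A l₀ 1, ∀ n ∈ N, a * n * a⁻¹ ∈ N) :
    (∀ k ∈ ε.ker, ∀ n ∈ N, k * n * k⁻¹ ∈ N) ∧
      ∀ u v : W, ε u = ε v →
        N.map (MulAut.conj u).toMonoidHom = N.map (MulAut.conj v).toMonoidHom := by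
  exact conj_of_normal_in_base_depends_only_on_image_general (H := fun p : Λ × B => A p.1 p.2)
    hgen.ge (l₀, 1) hNnorm fun p hp x hx n hn => hcomm p (l₀, 1) hp x hx n (hN hn)
end
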